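/- arXiv:2404.09720 — 2 statements merged into one kernel-verified Lean document; each statement's English description precedes it below -/
import Mathlib

section
/- For every integer k ≥ 3 there exist a real β > 0 and a positive integer s₀ such that the following holds. Let n, s be integers with s > s₀ and ks + k ≤ n ≤ (1+β)ks + k − 2. If F ⊆ binom([n],k) is a non-trivial k-graph with ν(F) ≤ s, then |F| ≤ max{|E₀(n,k,s)|, |E₁(n,k,s)|}. -/
/-- The `(x,y)`-shift of a single edge `A` with respect to the family `F`. -/
def shiftEdge (x y : ℕ) (F : Finset (Finset ℕ)) (A : Finset ℕ) : Finset ℕ :=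
  if y ∈ A ∧ x ∉ A ∧ insert x (A.erase y) ∉ F then insert x (A.erase y) else A

/-- The `(x,y)`-shift of a family `F`. -/
def shiftFam (x y : ℕ) (F : Finset (Finset ℕ)) : Finset (Finset ℕ) :=
  F.image (shiftEdge x y F)

/-- The matching number: the largest size of a pairwise-disjoint subfamily. -/
noncomputable def matchingNumber (F : Finset (Finset ℕ)) : ℕ :=
  sSup {m | ∃ M ⊆ F, M.card = m ∧ (M : Set (Finset ℕ)).PairwiseDisjoint id}

/-- `F` is non-trivial on `[n]`: no vertex of `[n] = {1,…,n}` is isolated. -/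
def NonTrivial (n : ℕ) (F : Finset (Finset ℕ)) : Prop :=
  ∀ v ∈ Finset.Icc 1 n, ∃ A ∈ F, v ∈ A

/-- `F` is shifted on `Y`: all `(x,y)`-shifts with `x < y` in `Y` fix `F`. -/
def ShiftedOn (Y : Finset ℕ) (F : Finset (Finset ℕ)) : Prop :=
  ∀ x ∈ Y, ∀ y ∈ Y, x < y → shiftFam x y F = F

/-- The clique number of the `k`-graph `F` on `[n]`. -/
noncomputable def cliqueNum (n k : ℕ) (F : Finset (Finset ℕ)) : ℕ :=
  sSup {m | ∃ U ⊆ Finset.Icc 1 n, U.card = m ∧ Finset.powersetCard k U ⊆ F}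

/-- The vertex-cover number of the `k`-graph `F` on `[n]`. -/
noncomputable def coverNum (n : ℕ) (F : Finset (Finset ℕ)) : ℕ :=
  sInf {t | ∃ T ⊆ Finset.Icc 1 n, T.card = t ∧ ∀ A ∈ F, (A ∩ T).Nonempty}

/-- The link `N_F(x)`. -/
def nbr (F : Finset (Finset ℕ)) (x : ℕ) : Finset (Finset ℕ) :=
  (F.filter fun A => x ∈ A).image fun A => A.erase x

/-- The link `N_F(x,y)`. -/
def nbr2 (F : Finset (Finset ℕ)) (x y : ℕ) : Finset (Finset ℕ) :=
  (F.filter fun A => x ∈ A ∧ y ∈ A).image fun A => (A.erase x).erase y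

/-- The link `N_F(x, ȳ)`. -/
def nbrBar (F : Finset (Finset ℕ)) (x y : ℕ) : Finset (Finset ℕ) :=
  (F.filter fun A => x ∈ A ∧ y ∉ A).image fun A => A.erase x

/-- The extremal family `E₀(n,k,s)`. -/
def E0 (n k s : ℕ) : Finset (Finset ℕ) :=
  Finset.powersetCard k (Finset.Icc 1 (k * s + k - 2)) ∪
  ((Finset.powersetCard k (Finset.Icc 1 n)).filter
    (fun A => A \ Finset.Icc 1 (k * s + k - 2) = {k * s + k - 1} ∧
      (A ∩ Finset.Icc 1 (k - 1)).Nonempty)) ∪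
  ((Finset.Icc (k * s + k) n).image (fun x => insert x (Finset.Icc 1 (k - 1))))

open Classical in
/-- The extremal family `E₁(n,k,s)`. -/
noncomputable def E1 (n k s : ℕ) : Finset (Finset ℕ) :=
  Finset.powersetCard k (Finset.Icc 1 (k * s + k - 2)) ∪
  ((Finset.powersetCard k (Finset.Icc 1 n)).filter
    (fun A => 1 ∈ A ∧ ∃ x ∈ Finset.Icc (k * s + k - 1) n,
      A \ Finset.Icc 1 (k * s + k - 2) = {x}))

/-- `F` is `s`-saturated on `[n]`. -/
def Saturated (n k s : ℕ) (F : Finset (Finset ℕ)) : Prop :=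
  matchingNumber F ≤ s ∧
  ∀ G ∈ Finset.powersetCard k (Finset.Icc 1 n), G ∉ F →
    matchingNumber (insert G F) = s + 1

/-!
Put `N = k s + k - 2` and `m = n - N`, and suppose `F` has more than `N.choose k` members. Then `F`
misses few `k`-sets, so all but `O(m)` *bad* vertices have almost full degree. On the good vertices,
exchanging entries between the columns of an array whose rows are matching edges shows that a
maximum matching is almost perfect, and it can be arranged to cover greedily every bad vertex
outside the set `S` of *poor* vertices, those of small degree. Hence `ν(F) ≤ s` forces
`m + t ≤ |S| + 1`, where `t ≥ 1` is the largest number of vertices of `S` covered by a matching of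
edges meeting `S`.

If `|S| > m`, maximality of `t` bounds the number of edges meeting `S` so well that
`|F| ≤ N.choose k`. If `|S| = m`, then `t = 1`: every edge meets `S` at most once, and the links of
the vertices of `S` are nonempty, pairwise cross-intersecting `(k - 1)`-families on `N` points.
Their total size is largest either for `m` copies of a full star, which gives `E₁`, or for `m - 1`
copies of a single set together with all sets meeting it, which gives `E₀`.
-/

namespace ErdosMatching

open Finset
open scoped Nat

/-! ### Estimates for binomial coefficients -/

lemma choose_add_le (a p b : ℕ) :
    (a + b).choose (p + 1) ≤ a.choose (p + 1) + b * (a + b) ^ p := by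
  induction b with
  | zero => simp
  | succ b ih =>
    calc (a + (b + 1)).choose (p + 1)
        = (a + b).choose p + (a + b).choose (p + 1) := Nat.choose_succ_succ _ _
      _ ≤ (a + b) ^ p + (a.choose (p + 1) + b * (a + b) ^ p) :=
          add_le_add (Nat.choose_le_pow _ _) ih
      _ = a.choose (p + 1) + (b + 1) * (a + b) ^ p := by ring
      _ ≤ a.choose (p + 1) + (b + 1) * (a + (b + 1)) ^ p := by gcongr; omega

lemma choose_add_mul_choose_le (a p b : ℕ) :
    a.choose (p + 1) + b * a.choose p ≤ (a + b).choose (p + 1) := by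
  induction b with
  | zero => simp
  | succ b ih =>
    calc a.choose (p + 1) + (b + 1) * a.choose p
        = a.choose p + (a.choose (p + 1) + b * a.choose p) := by ring
      _ ≤ (a + b).choose p + (a + b).choose (p + 1) :=
          add_le_add (Nat.choose_le_choose p (Nat.le_add_right a b)) ih
      _ = (a + (b + 1)).choose (p + 1) := (Nat.choose_succ_succ _ _).symm

lemma pow_le_mul_factorial_mul_choose {a k n q : ℕ} (h : n ≤ a * (q + 1 - k)) :
    n ^ k ≤ a ^ k * k ! * q.choose k :=
  calc n ^ k ≤ (a * (q + 1 - k)) ^ k := Nat.pow_le_pow_left h k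
    _ = a ^ k * (q + 1 - k) ^ k := mul_pow ..
    _ ≤ a ^ k * q.descFactorial k := Nat.mul_le_mul_left _ (q.pow_sub_le_descFactorial k)
    _ = a ^ k * k ! * q.choose k := by
        rw [Nat.descFactorial_eq_factorial_mul_choose, mul_assoc]

lemma pow_le_mul_choose_div (p : ℕ) {n : ℕ} (hn : 8 * (p + 1) * (p + 1) ≤ n) :
    n ^ p ≤ (8 * (p + 1)) ^ p * p ! * (n / (4 * (p + 1))).choose p := by
  apply pow_le_mul_factorial_mul_choose
  set q := n / (4 * (p + 1)) with hq
  have hn_lt : n < 4 * (p + 1) * (q + 1) := Nat.lt_mul_div_succ n (by omega)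
  have hpq : 2 * (p + 1) ≤ q := by
    rw [hq, Nat.le_div_iff_mul_le (by omega)]
    linarith
  calc n ≤ 4 * (p + 1) * (q + 1) := hn_lt.le
    _ ≤ 4 * (p + 1) * (2 * (q + 1 - p)) := Nat.mul_le_mul_left _ (by omega)
    _ = 8 * (p + 1) * (q + 1 - p) := by ring

lemma mul_pow_le_choose_pred {p b n : ℕ} (hp : 2 * (p + 1) ≤ n)
    (hn : b * (2 ^ (p + 1) * (p + 1)!) ≤ n) :
    b * n ^ p ≤ (n - 1).choose (p + 1) := by
  have hpow : n ^ (p + 1) ≤ 2 ^ (p + 1) * (p + 1)! * (n - 1).choose (p + 1) :=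
    pow_le_mul_factorial_mul_choose (by omega)
  refine Nat.le_of_mul_le_mul_left ?_ (show 0 < 2 ^ (p + 1) * (p + 1)! by positivity)
  calc 2 ^ (p + 1) * (p + 1)! * (b * n ^ p) = b * (2 ^ (p + 1) * (p + 1)!) * n ^ p := by ring
    _ ≤ n * n ^ p := Nat.mul_le_mul_right _ hn
    _ = n ^ (p + 1) := (pow_succ' n p).symm
    _ ≤ _ := hpow

lemma mul_choose_pred_le_choose_sub_choose {p n : ℕ} (hn : p + 2 ≤ n) :
    (p + 2) * (n - 1).choose (p + 1) ≤
      n.choose (p + 2) - (n - (p + 2)).choose (p + 2) + (p + 2) * ((p + 1) * n ^ p) := by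
  obtain ⟨a, rfl⟩ := Nat.exists_eq_add_of_le' hn
  have hlower : a.choose (p + 2) + (p + 2) * a.choose (p + 1) ≤ (a + (p + 2)).choose (p + 2) :=
    choose_add_mul_choose_le a (p + 1) (p + 2)
  have hupper : (a + (p + 1)).choose (p + 1) ≤ a.choose (p + 1) + (p + 1) * (a + (p + 2)) ^ p :=
    (choose_add_le a p (p + 1)).trans (by gcongr; omega)
  calc (p + 2) * (a + (p + 2) - 1).choose (p + 1)
      ≤ (p + 2) * (a.choose (p + 1) + (p + 1) * (a + (p + 2)) ^ p) :=
        Nat.mul_le_mul_left _ hupper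
    _ ≤ _ := by rw [mul_add, Nat.add_sub_cancel]; omega

section Degree

/-! ### Degrees in uniform families -/

variable {α : Type*} [DecidableEq α] {V D : Finset α} {F G : Finset (Finset α)} {x : α} {k p : ℕ}

/-- The degree of the vertex `v` in the family `F`: the number of members of `F` through `v`. -/
def degree (F : Finset (Finset α)) (v : α) : ℕ := #{A ∈ F | v ∈ A}

lemma degree_mono (h : F ⊆ G) (v : α) : degree F v ≤ degree G v :=
  card_le_card (filter_subset_filter _ h)

lemma sum_degree (hF : F ⊆ V.powersetCard k) : ∑ v ∈ V, degree F v = k * #F := by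
  have hdouble : ∑ v ∈ V, degree F v = ∑ A ∈ F, #{v ∈ V | v ∈ A} :=
    sum_card_bipartiteAbove_eq_sum_card_bipartiteBelow (· ∈ ·)
  rw [hdouble, mul_comm, ← smul_eq_mul, ← sum_const]
  refine sum_congr rfl fun A hA => ?_
  obtain ⟨hAV, hAk⟩ := mem_powersetCard.1 (hF hA)
  rw [filter_mem_eq_inter, inter_eq_right.2 hAV, hAk]

lemma degree_powersetCard (hx : x ∈ V) (p : ℕ) :
    degree (V.powersetCard (p + 1)) x = (#V - 1).choose p := by
  have h := card_filter_powersetCard_subset {x} V (p + 1) (singleton_subset_iff.2 hx) (by simp)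
  simpa [degree] using h

lemma degree_le_choose (hF : F ⊆ V.powersetCard (p + 1)) (hx : x ∈ V) :
    degree F x ≤ (#V - 1).choose p :=
  (degree_mono hF x).trans_eq (degree_powersetCard hx p)

lemma degree_sdiff_add_degree (hF : F ⊆ V.powersetCard (p + 1)) (hx : x ∈ V) :
    degree (V.powersetCard (p + 1) \ F) x + degree F x = (#V - 1).choose p := by
  rw [← degree_powersetCard hx, degree, degree, degree,
    ← card_union_of_disjoint (disjoint_filter_filter sdiff_disjoint), ← filter_union,
    sdiff_union_of_subset hF]

lemma card_le_sum_degree (h : ∀ A ∈ F, ¬Disjoint A D) : #F ≤ ∑ y ∈ D, degree F y := by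
  refine (card_le_card fun A hA => ?_).trans card_biUnion_le
  obtain ⟨y, hyA, hyD⟩ := not_disjoint_iff.1 (h A hA)
  exact mem_biUnion.2 ⟨y, hyD, mem_filter.2 ⟨hA, hyA⟩⟩

lemma card_le_choose_add_sum_degree (hF : F ⊆ V.powersetCard k) (hD : D ⊆ V) :
    #F ≤ (#V - #D).choose k + ∑ y ∈ D, degree F y := by
  rw [← card_filter_add_card_filter_not (s := F) (Disjoint · D), ← card_sdiff_of_subset hD,
    ← card_powersetCard]
  refine add_le_add (card_le_card fun A hA => ?_) ?_
  · obtain ⟨hAF, hAD⟩ := mem_filter.1 hA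
    obtain ⟨hAV, hAk⟩ := mem_powersetCard.1 (hF hAF)
    exact mem_powersetCard.2 ⟨subset_sdiff.2 ⟨hAV, hAD⟩, hAk⟩
  · exact (card_le_sum_degree fun A hA => (mem_filter.1 hA).2).trans
      (sum_le_sum fun y _ => degree_mono (filter_subset _ _) y)

lemma card_filter_mem_and_mem_le (hF : F ⊆ V.powersetCard (p + 2)) {y : α} (hxy : x ≠ y) :
    #{A ∈ F | x ∈ A ∧ y ∈ A} ≤ #V ^ p := by
  by_cases hV : {x, y} ⊆ V
  · calc #{A ∈ F | x ∈ A ∧ y ∈ A} ≤ #{A ∈ V.powersetCard (p + 2) | {x, y} ⊆ A} := by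
          refine card_le_card fun A hA => ?_
          obtain ⟨hAF, hxA, hyA⟩ := mem_filter.1 hA
          exact mem_filter.2 ⟨hF hAF, insert_subset hxA (singleton_subset_iff.2 hyA)⟩
      _ = (#V - 2).choose p := by
          rw [card_filter_powersetCard_subset _ _ _ hV (by simp [card_pair hxy]), card_pair hxy,
            Nat.add_sub_cancel]
      _ ≤ #V ^ p := (Nat.choose_le_pow _ _).trans (Nat.pow_le_pow_left (Nat.sub_le _ _) p)
  · refine (card_eq_zero.2 (filter_eq_empty_iff.2 fun A hA hxyA => hV ?_)).trans_le (Nat.zero_le _)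
    exact (insert_subset hxyA.1 (singleton_subset_iff.2 hxyA.2)).trans
      (mem_powersetCard.1 (hF hA)).1

lemma degree_le_card_mul_pow (hF : F ⊆ V.powersetCard (p + 2)) (hx : x ∉ D)
    (h : ∀ A ∈ F, x ∈ A → ¬Disjoint A D) : degree F x ≤ #D * #V ^ p :=
  calc degree F x ≤ ∑ y ∈ D, degree {A ∈ F | x ∈ A} y :=
        card_le_sum_degree fun A hA => h A (mem_filter.1 hA).1 (mem_filter.1 hA).2
    _ ≤ ∑ _y ∈ D, #V ^ p := sum_le_sum fun y hy => by
        rw [degree, filter_filter]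
        exact card_filter_mem_and_mem_le hF fun hxy => hx (hxy ▸ hy)
    _ = #D * #V ^ p := by rw [sum_const, smul_eq_mul]

lemma card_memberSubfamily (F : Finset (Finset α)) (x : α) :
    #(F.memberSubfamily x) = degree F x :=
  card_image_of_injOn fun A hA B hB hAB => by
    rw [← insert_erase (mem_filter.1 hA).2, hAB, insert_erase (mem_filter.1 hB).2]

end Degree

section CrossIntersecting

/-! ### Cross-intersecting families -/

variable {α : Type*} {V : Finset α} {A B : Finset (Finset α)} {x : α} {p : ℕ}

/-- Every member of `A` meets every member of `B`. -/
def CrossIntersecting (A B : Finset (Finset α)) : Prop :=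
  ∀ a ∈ A, ∀ b ∈ B, ¬Disjoint a b

/-- The larger of the total sizes of the two extremal configurations of `m` nonempty, pairwise
cross-intersecting families of `(p + 2)`-subsets of an `N`-set: all sets meeting a fixed
`(p + 2)`-set together with `m - 1` copies of that set, or `m` copies of a full star. -/
def crossBound (N p m : ℕ) : ℕ :=
  max (N.choose (p + 2) - (N - (p + 2)).choose (p + 2) + (m - 1)) (m * (N - 1).choose (p + 1))

lemma CrossIntersecting.symm (h : CrossIntersecting A B) : CrossIntersecting B A :=
  fun b hb a ha hba => h a ha b hb hba.symm

lemma card_filter_not_disjoint_add_choose [DecidableEq α] {b : Finset α} (hb : b ⊆ V) (r : ℕ) :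
    #{a ∈ V.powersetCard r | ¬Disjoint a b} + (#V - #b).choose r = (#V).choose r := by
  have hdisj : {a ∈ V.powersetCard r | Disjoint a b} = (V \ b).powersetCard r := by
    ext a
    simp only [mem_filter, mem_powersetCard, subset_sdiff]
    tauto
  rw [← card_sdiff_of_subset hb, ← card_powersetCard, ← card_powersetCard, ← hdisj, add_comm,
    card_filter_add_card_filter_not]

namespace CrossIntersecting

lemma card_add_choose_le {r : ℕ} (h : CrossIntersecting A B) (hA : A ⊆ V.powersetCard r)
    {b : Finset α} (hb : b ∈ B) (hbV : b ⊆ V) : #A + (#V - #b).choose r ≤ (#V).choose r := by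
  classical
  rw [← card_filter_not_disjoint_add_choose hbV]
  gcongr
  exact fun a ha => mem_filter.2 ⟨hA ha, h a ha b hb⟩

lemma card_le_mul_choose (h : CrossIntersecting A B) (hA : A ⊆ V.powersetCard (p + 1))
    {b : Finset α} (hb : b ∈ B) (hbV : b ⊆ V) : #A ≤ #b * (#V - 1).choose p := by
  classical
  exact (card_le_sum_degree fun a ha => h a ha b hb).trans
    (sum_le_card_nsmul _ _ _ fun _ hy => degree_le_choose hA (hbV hy))

lemma degree_le [DecidableEq α] (h : CrossIntersecting A B) (hA : A ⊆ V.powersetCard (p + 2))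
    (hB : B ⊆ V.powersetCard (p + 2)) {b : Finset α} (hb : b ∈ B) (hx : x ∉ b) :
    degree A x ≤ (p + 2) * #V ^ p := by
  rw [← (mem_powersetCard.1 (hB hb)).2]
  exact degree_le_card_mul_pow hA hx fun a ha _ => h a ha b hb

lemma card_le_of_forall_exists_notMem (h : CrossIntersecting A B)
    (hA : A ⊆ V.powersetCard (p + 2)) (hB : B ⊆ V.powersetCard (p + 2)) (hBne : B.Nonempty)
    (hBx : ∀ x, ∃ b ∈ B, x ∉ b) : #A ≤ (p + 2) * ((p + 2) * #V ^ p) := by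
  classical
  obtain ⟨b, hb⟩ := hBne
  calc #A ≤ ∑ y ∈ b, degree A y := card_le_sum_degree fun a ha => h a ha b hb
    _ ≤ ∑ _y ∈ b, (p + 2) * #V ^ p := sum_le_sum fun y _ =>
        let ⟨_, hb', hy⟩ := hBx y
        h.degree_le hA hB hb' hy
    _ = (p + 2) * ((p + 2) * #V ^ p) := by
        rw [sum_const, smul_eq_mul, (mem_powersetCard.1 (hB hb)).2]

lemma card_le_of_ne (h : CrossIntersecting A B) (hA : A ⊆ V.powersetCard (p + 2))
    (hB : B ⊆ V.powersetCard (p + 2)) {b₁ b₂ : Finset α} (hb₁ : b₁ ∈ B) (hb₂ : b₂ ∈ B)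
    (hne : b₁ ≠ b₂) :
    #A ≤ (p + 1) * (#V - 1).choose (p + 1) + (p + 2) * ((p + 2) * #V ^ p) := by
  classical
  obtain ⟨hb₁V, hb₁card⟩ := mem_powersetCard.1 (hB hb₁)
  have hb₂card := (mem_powersetCard.1 (hB hb₂)).2
  have hinter : #(b₁ ∩ b₂) ≤ p + 1 := by
    by_contra! hlt
    have hsub : b₁ ⊆ b₂ :=
      inter_eq_left.1 (eq_of_subset_of_card_le inter_subset_left (by omega))
    exact hne (eq_of_subset_of_card_le hsub (by omega))
  calc #A ≤ ∑ y ∈ b₁, degree A y := card_le_sum_degree fun a ha => h a ha b₁ hb₁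
    _ = ∑ y ∈ b₁ ∩ b₂, degree A y + ∑ y ∈ b₁ \ b₂, degree A y :=
        (sum_inter_add_sum_sdiff b₁ b₂ _).symm
    _ ≤ #(b₁ ∩ b₂) * (#V - 1).choose (p + 1) + #(b₁ \ b₂) * ((p + 2) * #V ^ p) :=
        add_le_add
          (sum_le_card_nsmul _ _ _ fun y hy => degree_le_choose hA (hb₁V (mem_inter.1 hy).1))
          (sum_le_card_nsmul _ _ _ fun y hy => h.degree_le hA hB hb₂ (mem_sdiff.1 hy).2)
    _ ≤ _ := by
        gcongr
        exact (card_le_card sdiff_subset).trans_eq hb₁card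

lemma card_le_of_forall_mem (h : CrossIntersecting A B) (hA : A ⊆ V.powersetCard (p + 2))
    (hB : B ⊆ V.powersetCard (p + 2)) (hBx : ∀ b ∈ B, x ∈ b) {a : Finset α} (ha : a ∈ A)
    (hxa : x ∉ a) : #B ≤ (p + 2) * #V ^ p := by
  classical
  rw [← filter_true_of_mem hBx]
  exact h.symm.degree_le hB hA ha hxa

/- When `c` is large, `c * #B` is negligible against `c` stars; when it is small, two members of
`B` already cost `A` almost a full star. -/
lemma card_add_mul_card_le_of_one_lt (h : CrossIntersecting A B) (c : ℕ)
    (hA : A ⊆ V.powersetCard (p + 2)) (hB : B ⊆ V.powersetCard (p + 2)) (hV : p + 2 ≤ #V)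
    (hBone : 1 < #B) (hBsmall : #B ≤ (p + 2) * #V ^ p)
    (hlarge : 3 * (p + 2) ^ 2 * #V ^ p ≤ (#V - 1).choose (p + 1)) :
    #A + c * #B ≤ crossBound (#V) p (c + 1) := by
  obtain ⟨b₁, hb₁, b₂, hb₂, hne⟩ := one_lt_card.1 hBone
  obtain ⟨hb₁V, hb₁card⟩ := mem_powersetCard.1 (hB hb₁)
  set star := (#V - 1).choose (p + 1)
  set codeg := #V ^ p
  have hcB : c * #B ≤ c * ((p + 2) * codeg) := Nat.mul_le_mul_left c hBsmall
  by_cases hc : p + 2 ≤ c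
  · have hAle : #A ≤ (p + 2) * star := by
      simpa only [hb₁card] using h.card_le_mul_choose hA hb₁ hb₁V
    obtain ⟨d, rfl⟩ := Nat.exists_eq_add_of_le hc
    refine le_max_of_le_right ?_
    nlinarith [Nat.mul_le_mul_left (1 + d) hlarge, Nat.zero_le (d * p * codeg),
      Nat.zero_le (d * p * p * codeg), Nat.zero_le (p * codeg), Nat.zero_le (p * p * codeg),
      Nat.zero_le (d * codeg)]
  · have hAle : #A ≤ (p + 1) * star + (p + 2) * ((p + 2) * codeg) :=
      h.card_le_of_ne hA hB hb₁ hb₂ hne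
    have hcB' : c * #B ≤ (p + 1) * ((p + 2) * codeg) := hcB.trans (by gcongr; omega)
    have hstar : (p + 2) * star ≤ (#V).choose (p + 2) - (#V - (p + 2)).choose (p + 2)
        + (p + 2) * ((p + 1) * codeg) := mul_choose_pred_le_choose_sub_choose hV
    refine le_max_of_le_left (le_add_right ?_)
    nlinarith [Nat.zero_le (p * codeg), Nat.zero_le (p * p * codeg)]

theorem card_add_mul_card_le (h : CrossIntersecting A B) (c : ℕ)
    (hA : A ⊆ V.powersetCard (p + 2)) (hB : B ⊆ V.powersetCard (p + 2)) (hBne : B.Nonempty)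
    (hBA : #B ≤ #A) (hV : p + 2 ≤ #V)
    (hlarge : 3 * (p + 2) ^ 2 * #V ^ p ≤ (#V - 1).choose (p + 1)) :
    #A + c * #B ≤ crossBound (#V) p (c + 1) := by
  classical
  have le_of_card_le (hAle : #A ≤ (#V - 1).choose (p + 1))
      (hBle : #B ≤ (#V - 1).choose (p + 1)) : #A + c * #B ≤ crossBound (#V) p (c + 1) :=
    le_max_of_le_right <|
      (add_le_add hAle (Nat.mul_le_mul_left c hBle)).trans_eq (by ring)
  by_cases hBx : ∃ x, ∀ b ∈ B, x ∈ b
  · obtain ⟨x, hBx⟩ := hBx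
    obtain ⟨b, hb⟩ := hBne
    obtain ⟨hbV, hbcard⟩ := mem_powersetCard.1 (hB hb)
    by_cases hAx : ∀ a ∈ A, x ∈ a
    · have hxV : x ∈ V := hbV (hBx b hb)
      have hAle := degree_le_choose hA hxV
      have hBle := degree_le_choose hB hxV
      rw [degree, filter_true_of_mem ‹_›] at hAle hBle
      exact le_of_card_le hAle hBle
    · push Not at hAx
      obtain ⟨a, ha, hxa⟩ := hAx
      rcases (Nat.one_le_iff_ne_zero.2 (card_ne_zero_of_mem hb)).eq_or_lt with hone | hlt
      · have hAle := h.card_add_choose_le hA hb hbV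
        rw [hbcard] at hAle
        refine le_max_of_le_left ?_
        rw [← hone]
        omega
      · exact h.card_add_mul_card_le_of_one_lt c hA hB hV hlt
          (h.card_le_of_forall_mem hA hB hBx ha hxa) hlarge
  · push Not at hBx
    have hAle := h.card_le_of_forall_exists_notMem hA hB hBne hBx
    have hAle' : #A ≤ (#V - 1).choose (p + 1) := by nlinarith
    exact le_of_card_le hAle' (hBA.trans hAle')

end CrossIntersecting

theorem sum_card_le_crossBound {ι : Type*} {S : Finset ι}
    {L : ι → Finset (Finset α)} (hS : 2 ≤ #S) (hL : ∀ x ∈ S, L x ⊆ V.powersetCard (p + 2))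
    (hLne : ∀ x ∈ S, (L x).Nonempty)
    (hcross : ∀ x ∈ S, ∀ y ∈ S, x ≠ y → CrossIntersecting (L x) (L y)) (hV : p + 2 ≤ #V)
    (hlarge : 3 * (p + 2) ^ 2 * #V ^ p ≤ (#V - 1).choose (p + 1)) :
    ∑ x ∈ S, #(L x) ≤ crossBound (#V) p (#S) := by
  classical
  obtain ⟨x₀, hx₀, hmax⟩ := exists_max_image S (fun x => #(L x)) (card_pos.1 (by omega))
  obtain ⟨c, hc⟩ : ∃ c, #S = c + 1 := ⟨#S - 1, by omega⟩
  have herase : #(S.erase x₀) = c := by rw [card_erase_of_mem hx₀, hc, Nat.add_sub_cancel]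
  have hpair : ∀ x ∈ S.erase x₀, #(L x₀) + c * #(L x) ≤ crossBound (#V) p (c + 1) := by
    intro x hx
    obtain ⟨hne, hxS⟩ := mem_erase.1 hx
    exact (hcross x₀ hx₀ x hxS hne.symm).card_add_mul_card_le c (hL x₀ hx₀) (hL x hxS)
      (hLne x hxS) (hmax x hxS) hV hlarge
  rw [hc, ← add_sum_erase S _ hx₀]
  refine Nat.le_of_mul_le_mul_left ?_ (show 0 < c by omega)
  calc c * (#(L x₀) + ∑ x ∈ S.erase x₀, #(L x))
      = ∑ x ∈ S.erase x₀, (#(L x₀) + c * #(L x)) := by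
        rw [sum_add_distrib, sum_const, ← mul_sum, herase, smul_eq_mul, mul_add]
    _ ≤ #(S.erase x₀) • crossBound (#V) p (c + 1) := sum_le_card_nsmul _ _ _ hpair
    _ = c * crossBound (#V) p (c + 1) := by rw [herase, smul_eq_mul]

end CrossIntersecting

section Matching

/-! ### Matchings and column exchange -/

variable {α : Type*} {V W U S X : Finset α} {F M M' T : Finset (Finset α)} {k p q r : ℕ}

/-- `M` is a matching of the family `F`: a subfamily with pairwise disjoint members. -/
structure IsMatching (F M : Finset (Finset α)) : Prop where
  subset : M ⊆ F
  pairwiseDisjoint : (M : Set (Finset α)).PairwiseDisjoint id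

lemma exists_isMatching_forall_le (F : Finset (Finset α)) (f : Finset (Finset α) → ℕ) :
    ∃ M, IsMatching F M ∧ ∀ M', IsMatching F M' → f M' ≤ f M := by
  classical
  obtain ⟨M, hM, hmax⟩ := exists_max_image {M ∈ F.powerset | IsMatching F M} f
    ⟨∅, mem_filter.2 ⟨empty_mem_powerset F, empty_subset F, by simp⟩⟩
  exact ⟨M, (mem_filter.1 hM).2,
    fun M' hM' => hmax M' (mem_filter.2 ⟨mem_powerset.2 hM'.subset, hM'⟩)⟩

lemma notMem_of_disjoint_biUnion [DecidableEq α] {A : Finset α} (hA : A.Nonempty)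
    (h : Disjoint A (M.biUnion id)) : A ∉ M := fun hAM =>
  hA.ne_empty ((disjoint_self_iff_empty A).1 (h.mono_right (subset_biUnion_of_mem id hAM)))

namespace IsMatching

lemma mono {F' : Finset (Finset α)} (hM : IsMatching F M) (h : F ⊆ F') : IsMatching F' M :=
  ⟨hM.subset.trans h, hM.pairwiseDisjoint⟩

protected lemma singleton {A : Finset α} (hA : A ∈ F) : IsMatching F {A} :=
  ⟨singleton_subset_iff.2 hA, by simp⟩

variable [DecidableEq α]

protected lemma biUnion_subset (hM : IsMatching F M) (hF : F ⊆ V.powersetCard k) :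
    M.biUnion id ⊆ V :=
  biUnion_subset.2 fun _ hA => (mem_powersetCard.1 (hF (hM.subset hA))).1

protected lemma card_biUnion (hM : IsMatching F M) (hF : F ⊆ V.powersetCard k) :
    #(M.biUnion id) = k * #M := by
  rw [card_biUnion hM.pairwiseDisjoint,
    sum_const_nat (m := k) (f := fun A => #(id A))
      fun A hA => (mem_powersetCard.1 (hF (hM.subset hA))).2, mul_comm]

protected lemma union (hM : IsMatching F M) (hM' : IsMatching F M')
    (h : Disjoint (M.biUnion id) (M'.biUnion id)) : IsMatching F (M ∪ M') := by
  refine ⟨union_subset hM.subset hM'.subset, ?_⟩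
  rw [coe_union]
  refine hM.pairwiseDisjoint.union hM'.pairwiseDisjoint fun A hA B hB _ => ?_
  exact h.mono (subset_biUnion_of_mem id hA) (subset_biUnion_of_mem id hB)

protected lemma insert {A : Finset α} (hM : IsMatching F M) (hA : A ∈ F)
    (h : Disjoint A (M.biUnion id)) : IsMatching F (insert A M) := by
  refine ⟨insert_subset hA hM.subset, ?_⟩
  rw [coe_insert]
  exact hM.pairwiseDisjoint.insert fun B hB _ => h.mono_right (subset_biUnion_of_mem id hB)

protected lemma card_union (hM : IsMatching F M) (hM' : IsMatching F M')
    (h : Disjoint (M.biUnion id) (M'.biUnion id)) (hF : F ⊆ V.powersetCard (p + 1)) :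
    #(M ∪ M') = #M + #M' := by
  refine Nat.eq_of_mul_eq_mul_left p.succ_pos ?_
  rw [Nat.succ_eq_add_one, mul_add, ← (hM.union hM' h).card_biUnion hF, ← hM.card_biUnion hF,
    ← hM'.card_biUnion hF, union_biUnion, card_union_of_disjoint h]

lemma card_le_card_inter_biUnion (hM : IsMatching F M) (hS : ∀ A ∈ M, ¬Disjoint A S) :
    #M ≤ #(S ∩ M.biUnion id) := by
  rw [inter_biUnion]
  refine card_le_card_biUnion (fun A hA B hB hAB => ?_) fun A hA => ?_
  · exact (hM.pairwiseDisjoint hA hB hAB).mono inter_subset_right inter_subset_right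
  · exact not_disjoint_iff_nonempty_inter.1 fun h => hS A hA h.symm

end IsMatching

/-- `g` lists, without repetition, `r` elements of each member of `T`. -/
def Enumerates (g : Finset α → Fin r → α) (T : Finset (Finset α)) : Prop :=
  ∀ A ∈ T, Function.Injective (g A) ∧ ∀ i, g A i ∈ A

lemma exists_enumerates (hT : T.Nonempty) (h : ∀ A ∈ T, r ≤ #A) :
    ∃ g : Finset α → Fin r → α, Enumerates g T := by
  have hlist : ∀ A ∈ T, ∃ f : Fin r → α, Function.Injective f ∧ ∀ i, f i ∈ A := fun A hA =>
    ⟨fun i => A.equivFin.symm (Fin.castLE (h A hA) i),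
      Subtype.val_injective.comp (A.equivFin.symm.injective.comp (Fin.castLE_injective _)),
      fun i => (A.equivFin.symm _).2⟩
  have : Nonempty (Fin r → α) := let ⟨A, hA⟩ := hT; (hlist A hA).nonempty
  choose! g hg using hlist
  exact ⟨g, hg⟩

namespace Enumerates

variable {g : Finset α → Fin r → α} {𝒰 : Finset (Finset α)} {A B : Finset α} {i j : Fin r}

lemma eq_and_eq (hg : Enumerates g 𝒰) (h𝒰 : (𝒰 : Set (Finset α)).PairwiseDisjoint id)
    (hA : A ∈ 𝒰) (hB : B ∈ 𝒰) (h : g A i = g B j) : A = B ∧ i = j := by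
  obtain rfl : A = B :=
    h𝒰.elim_finset hA hB (g A i) ((hg A hA).2 i) (h ▸ (hg B hB).2 j)
  exact ⟨rfl, (hg A hA).1 h⟩

end Enumerates

variable [DecidableEq α] {g : Finset α → Fin r → α}

/-- The `i`-th column of the array whose rows are the members of `T` as listed by `g`. -/
def column (g : Finset α → Fin r → α) (T : Finset (Finset α)) (i : Fin r) : Finset α :=
  T.image (g · i)

lemma mem_column {A : Finset α} (hA : A ∈ T) (i : Fin r) : g A i ∈ column g T i :=
  mem_image_of_mem (g · i) hA

namespace Enumerates

variable {𝒰 : Finset (Finset α)} {A : Finset α} {i j : Fin r}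

lemma apply_mem_column (hg : Enumerates g 𝒰) (h𝒰 : (𝒰 : Set (Finset α)).PairwiseDisjoint id)
    (hT : T ⊆ 𝒰) (hA : A ∈ 𝒰) : g A i ∈ column g T j ↔ A ∈ T ∧ i = j := by
  refine ⟨fun h => ?_, fun ⟨hAT, hij⟩ => hij ▸ mem_column hAT i⟩
  obtain ⟨B, hB, hBA⟩ := mem_image.1 h
  obtain ⟨rfl, rfl⟩ := hg.eq_and_eq h𝒰 (hT hB) hA hBA
  exact ⟨hB, rfl⟩

lemma card_column (hg : Enumerates g 𝒰) (h𝒰 : (𝒰 : Set (Finset α)).PairwiseDisjoint id)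
    (hT : T ⊆ 𝒰) (i : Fin r) : #(column g T i) = #T :=
  card_image_of_injOn fun _ hA _ hB h => (hg.eq_and_eq h𝒰 (hT hA) (hT hB) h).1

lemma column_subset (hg : Enumerates g 𝒰) (hT : T ⊆ 𝒰) (i : Fin r) :
    column g T i ⊆ T.biUnion id :=
  image_subset_iff.2 fun A hA => mem_biUnion.2 ⟨A, hA, (hg A (hT hA)).2 i⟩

lemma disjoint_column (hg : Enumerates g 𝒰) (h𝒰 : (𝒰 : Set (Finset α)).PairwiseDisjoint id)
    (hT : T ⊆ 𝒰) (hij : i ≠ j) : Disjoint (column g T i) (column g T j) := by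
  refine disjoint_left.2 fun x hi hj => ?_
  obtain ⟨A, hA, rfl⟩ := mem_image.1 hi
  exact hij ((hg.apply_mem_column h𝒰 hT (hT hA)).1 hj).2

lemma disjoint_biUnion_column (hg : Enumerates g 𝒰)
    (h𝒰 : (𝒰 : Set (Finset α)).PairwiseDisjoint id) (hT : T ⊆ 𝒰) :
    Disjoint ((𝒰 \ T).biUnion id) ((univ.image (column g T)).biUnion id) := by
  simp only [disjoint_biUnion_left, disjoint_biUnion_right, mem_image, mem_univ, true_and,
    forall_exists_index, forall_apply_eq_imp_iff, id_eq]
  refine fun i A hA => disjoint_of_subset_right (hg.column_subset hT i) ?_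
  refine (disjoint_biUnion_right _ _ _).2 fun B hB => ?_
  obtain ⟨hA𝒰, hAT⟩ := mem_sdiff.1 hA
  exact h𝒰 hA𝒰 (hT hB) (by rintro rfl; exact hAT hB)

lemma exists_isMatching_card_eq (hg : Enumerates g 𝒰)
    (h𝒰 : (𝒰 : Set (Finset α)).PairwiseDisjoint id) (hT : T ⊆ 𝒰) (hTne : T.Nonempty)
    (hF : F ⊆ V.powersetCard (p + 1)) (hrest : 𝒰 \ T ⊆ F) (hcol : ∀ i, column g T i ∈ F) :
    ∃ M, IsMatching F M ∧ #M = #(𝒰 \ T) + r := by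
  have hrows : IsMatching F (𝒰 \ T) := ⟨hrest, h𝒰.subset (coe_subset.2 sdiff_subset)⟩
  have hcols : IsMatching F (univ.image (column g T)) := by
    refine ⟨image_subset_iff.2 fun i _ => hcol i, ?_⟩
    rw [coe_image]
    rintro _ ⟨i, -, rfl⟩ _ ⟨j, -, rfl⟩ hij
    exact hg.disjoint_column h𝒰 hT (ne_of_apply_ne _ hij)
  have hinj : Function.Injective (column g T) := by
    intro i j hij
    obtain ⟨A, hA⟩ := hTne
    exact ((hg.apply_mem_column h𝒰 hT (hT hA)).1 (hij ▸ mem_column hA i)).2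
  have hdisj := hg.disjoint_biUnion_column h𝒰 hT
  exact ⟨_, hrows.union hcols hdisj, by
    rw [hrows.card_union hcols hdisj hF, card_image_of_injective _ hinj, card_univ,
      Fintype.card_fin]⟩

lemma column_injOn (hg : Enumerates g 𝒰) (h𝒰 : (𝒰 : Set (Finset α)).PairwiseDisjoint id)
    (i : Fin r) : Set.InjOn (column g · i) {T | T ⊆ 𝒰} := by
  have key : ∀ T ⊆ 𝒰, ∀ T' ⊆ 𝒰, column g T i = column g T' i → T ⊆ T' :=
    fun T hT T' hT' h A hA =>
      ((hg.apply_mem_column h𝒰 hT' (hT hA)).1 (h ▸ mem_column hA i)).1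
  exact fun T hT T' hT' h => (key T hT T' hT' h).antisymm (key T' hT' T hT h.symm)

lemma card_filter_column_mem_le (hg : Enumerates g (insert U M))
    (hdisj : ((insert U M : Finset (Finset α)) : Set (Finset α)).PairwiseDisjoint id)
    (hU : U ∉ M) (𝒢 : Finset (Finset α)) (i : Fin r) (p : ℕ) :
    #{T ∈ M.powersetCard p | column g (insert U T) i ∈ 𝒢} ≤ degree 𝒢 (g U i) := by
  refine card_le_card_of_injOn (fun T => column g (insert U T) i) (fun T hT => ?_)
    fun T hT T' hT' h => ?_
  · exact mem_filter.2 ⟨(mem_filter.1 hT).2, mem_column (mem_insert_self U T) i⟩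
  · have hTM := (mem_powersetCard.1 (mem_filter.1 hT).1).1
    have hTM' := (mem_powersetCard.1 (mem_filter.1 hT').1).1
    have hins : insert U T = insert U T' := hg.column_injOn hdisj i
      (insert_subset_insert U hTM) (insert_subset_insert U hTM') h
    rw [← erase_insert fun h => hU (hTM h), hins, erase_insert fun h => hU (hTM' h)]

end Enumerates

namespace IsMatching

/- Adjoin `U` to `M` and list the members as rows of an array with `p + 1` columns. If all `p + 1`
columns of the square with rows `U` and `T` were edges, they could replace `T` in `M`. -/
lemma exists_column_mem_sdiff (hmax : ∀ M', IsMatching F M' → #M' ≤ #M) (hMF : M ⊆ F)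
    (hF : F ⊆ W.powersetCard (p + 1)) {g : Finset α → Fin (p + 1) → α}
    (hg : Enumerates g (insert U M))
    (hdisj : ((insert U M : Finset (Finset α)) : Set (Finset α)).PairwiseDisjoint id)
    (hUW : U ⊆ W) (hUM : U ∉ M) (hT : T ∈ M.powersetCard p) :
    ∃ i, column g (insert U T) i ∈ W.powersetCard (p + 1) \ F := by
  obtain ⟨hTM, hTcard⟩ := mem_powersetCard.1 hT
  have hsub := insert_subset_insert U hTM
  have hcardT : #(insert U T) = p + 1 := by
    rw [card_insert_of_notMem fun h => hUM (hTM h), hTcard]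
  have hmem : ∀ i, column g (insert U T) i ∈ W.powersetCard (p + 1) := by
    refine fun i => mem_powersetCard.2 ⟨(hg.column_subset hsub i).trans ?_, ?_⟩
    · rw [biUnion_insert]
      exact union_subset hUW (biUnion_subset.2 fun A hA =>
        (mem_powersetCard.1 (hF (hMF (hTM hA)))).1)
    · rw [hg.card_column hdisj hsub, hcardT]
  by_contra! hcol
  have hrest : insert U M \ insert U T ⊆ F := by
    rw [insert_sdiff_insert]
    exact sdiff_subset.trans hMF
  obtain ⟨M', hM', hM'card⟩ := hg.exists_isMatching_card_eq hdisj hsub (insert_nonempty U T) hF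
    hrest fun i => by_contra fun h => hcol i (mem_sdiff.2 ⟨hmem i, h⟩)
  have hle := hmax M' hM'
  have hcardM := card_le_card hsub
  rw [hM'card, card_sdiff_of_subset hsub] at hle
  rw [card_insert_of_notMem hUM] at hle hcardM
  omega

lemma choose_card_le_sum_degree (hM : IsMatching F M)
    (hmax : ∀ M', IsMatching F M' → #M' ≤ #M) (hF : F ⊆ W.powersetCard (p + 1))
    (hU : U ∈ (W \ M.biUnion id).powersetCard (p + 1)) :
    (#M).choose p ≤ ∑ u ∈ U, degree (W.powersetCard (p + 1) \ F) u := by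
  obtain ⟨hUsub, hUcard⟩ := mem_powersetCard.1 hU
  obtain ⟨hUW, hUdisj⟩ := subset_sdiff.1 hUsub
  have hUM : U ∉ M := notMem_of_disjoint_biUnion (card_pos.1 (by omega)) hUdisj
  have hdisj : ((insert U M : Finset (Finset α)) : Set (Finset α)).PairwiseDisjoint id := by
    rw [coe_insert]
    exact hM.pairwiseDisjoint.insert fun A hA _ => hUdisj.mono_right (subset_biUnion_of_mem id hA)
  have hcard : ∀ A ∈ insert U M, p + 1 ≤ #A := (forall_mem_insert _ _ _).2
    ⟨hUcard.ge, fun A hA => (mem_powersetCard.1 (hF (hM.subset hA))).2.ge⟩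
  obtain ⟨g, hg⟩ := exists_enumerates (insert_nonempty U M) hcard
  obtain ⟨hgU, hgmem⟩ := hg U (mem_insert_self U M)
  set missing := W.powersetCard (p + 1) \ F
  calc (#M).choose p = #(M.powersetCard p) := (card_powersetCard _ _).symm
    _ ≤ #(univ.biUnion fun i => {T ∈ M.powersetCard p | column g (insert U T) i ∈ missing}) := by
        refine card_le_card fun T hT => ?_
        obtain ⟨i, hi⟩ := exists_column_mem_sdiff hmax hM.subset hF hg hdisj hUW hUM hT
        exact mem_biUnion.2 ⟨i, mem_univ i, mem_filter.2 ⟨hT, hi⟩⟩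
    _ ≤ ∑ i, degree missing (g U i) := card_biUnion_le.trans <|
        sum_le_sum fun i _ => hg.card_filter_column_mem_le hdisj hUM missing i p
    _ = ∑ u ∈ univ.image (g U), degree missing u := (sum_image hgU.injOn).symm
    _ ≤ ∑ u ∈ U, degree missing u :=
        sum_le_sum_of_subset (image_subset_iff.2 fun i _ => hgmem i)

lemma choose_card_sub_one_le_degree (hM : IsMatching F M)
    (hmax : ∀ M', IsMatching F M' → #M' ≤ #M) {u : α} (hu : u ∈ W \ M.biUnion id) :
    (#(W \ M.biUnion id) - 1).choose p ≤ degree (W.powersetCard (p + 1) \ F) u := by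
  rw [← degree_powersetCard hu]
  refine degree_mono (fun A hA => mem_sdiff.2 ⟨powersetCard_mono sdiff_subset hA, fun hAF => ?_⟩) u
  obtain ⟨hAsub, hAcard⟩ := mem_powersetCard.1 hA
  have hdisj : Disjoint A (M.biUnion id) := disjoint_of_subset_left hAsub sdiff_disjoint
  have hle := hmax _ (hM.insert hAF hdisj)
  rw [card_insert_of_notMem
    (notMem_of_disjoint_biUnion (card_pos.1 (by omega)) hdisj)] at hle
  omega

end IsMatching

theorem exists_isMatching_card_lt (hF : F ⊆ W.powersetCard (p + 1)) (hW : (p + 2) * q ≤ #W)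
    (hmissing : ∀ u ∈ W, (p + 1) * degree (W.powersetCard (p + 1) \ F) u < q.choose p) :
    ∃ M, IsMatching F M ∧ #W < (p + 1) * #M + (p + 1) := by
  obtain ⟨M, hM, hmax⟩ := exists_isMatching_forall_le F card
  refine ⟨M, hM, ?_⟩
  by_contra! hle
  have huncov : #(W \ M.biUnion id) + (p + 1) * #M = #W := by
    rw [← hM.card_biUnion hF, card_sdiff_add_card_eq_card (hM.biUnion_subset hF)]
  rcases le_or_gt q #M with hq | hq
  · obtain ⟨U, hU⟩ := powersetCard_nonempty.2 (show p + 1 ≤ #(W \ M.biUnion id) by omega)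
    have hchoose := (Nat.choose_le_choose p hq).trans (hM.choose_card_le_sum_degree hmax hF hU)
    obtain ⟨hUsub, hUcard⟩ := mem_powersetCard.1 hU
    have hlt : ∑ u ∈ U, (p + 1) * degree (W.powersetCard (p + 1) \ F) u
        < ∑ _u ∈ U, q.choose p := sum_lt_sum_of_nonempty (card_pos.1 (by omega))
      fun u hu => hmissing u (mem_sdiff.1 (hUsub hu)).1
    rw [← mul_sum, sum_const, hUcard, smul_eq_mul] at hlt
    exact (Nat.lt_of_mul_lt_mul_left hlt).not_ge hchoose
  · have hqle : q ≤ #(W \ M.biUnion id) - 1 := by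
      have hMq : (p + 1) * #M + (p + 1) ≤ (p + 1) * q := Nat.mul_le_mul_left _ hq
      have hsplit : (p + 2) * q = (p + 1) * q + q := by ring
      omega
    obtain ⟨u, hu⟩ : (W \ M.biUnion id).Nonempty := card_pos.1 (by omega)
    have hchoose :=
      (Nat.choose_le_choose p hqle).trans (hM.choose_card_sub_one_le_degree hmax hu)
    have := hmissing u (mem_sdiff.1 hu).1
    nlinarith

end Matching

section Absorption

/-! ### Absorbing a small set of bad vertices -/

variable {α : Type*} [DecidableEq α] {V S B X : Finset α} {F M M₀ : Finset (Finset α)} {p q : ℕ}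

theorem IsMatching.exists_superset_covering (hM : IsMatching F M)
    (hF : F ⊆ V.powersetCard (p + 2))
    (hX : ∀ v ∈ X, (p + 2) * (#M + #X) * #V ^ p < degree F v) :
    ∃ M', IsMatching F M' ∧ M ⊆ M' ∧ X ⊆ M'.biUnion id ∧ #M' ≤ #M + #X := by
  induction X using Finset.induction_on with
  | empty => exact ⟨M, hM, Subset.rfl, empty_subset _, by simp⟩
  | insert v X hv ih =>
    rw [card_insert_of_notMem hv] at hX ⊢
    obtain ⟨M', hM', hsub, hcover, hcard⟩ := ih fun w hw =>
      lt_of_le_of_lt (by gcongr; omega) (hX w (mem_insert_of_mem hw))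
    by_cases hvM' : v ∈ M'.biUnion id
    · exact ⟨M', hM', hsub, insert_subset hvM' hcover, by omega⟩
    obtain ⟨A, hA, hvA, hdisj⟩ : ∃ A ∈ F, v ∈ A ∧ Disjoint A (M'.biUnion id) := by
      by_contra! hmeet
      have hdeg := degree_le_card_mul_pow hF hvM' hmeet
      rw [hM'.card_biUnion hF] at hdeg
      refine (hX v (mem_insert_self v X)).not_ge (hdeg.trans ?_)
      gcongr
      omega
    refine ⟨insert A M', hM'.insert hA hdisj, hsub.trans (subset_insert A M'), ?_, ?_⟩
    · rw [biUnion_insert]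
      exact insert_subset (mem_union_left _ hvA) (hcover.trans subset_union_right)
    · exact (card_insert_le A M').trans (by omega)

/- Cover `B \ S` greedily, extending `M₀`; outside the vertices used so far and `S` all vertices are
good, so a near-perfect matching finishes. -/
theorem exists_isMatching_card_add_card_inter_le (hF : F ⊆ V.powersetCard (p + 2)) (hSB : S ⊆ B)
    (hBV : B ⊆ V)
    (hgood : ∀ u ∈ V \ B, (p + 2) * degree (V.powersetCard (p + 2) \ F) u < q.choose (p + 1))
    (hmid : ∀ v ∈ B \ S, (p + 2) * #B * #V ^ p < degree F v) (hV : (p + 3) * (q + #B) ≤ #V)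
    (hM₀ : IsMatching F M₀) (hM₀card : #M₀ ≤ #S) :
    ∃ M, IsMatching F M ∧ #V + #(S ∩ M₀.biUnion id) ≤ (p + 2) * #M + (p + 1) + #S := by
  have hBS := card_sdiff_add_card_eq_card hSB
  obtain ⟨M₁, hM₁, hM₀₁, hcover, hM₁card⟩ := hM₀.exists_superset_covering hF fun v hv =>
    lt_of_le_of_lt (by gcongr; omega) (hmid v hv)
  set D := S ∪ M₁.biUnion id
  have hDV : D ⊆ V := union_subset (hSB.trans hBV) (hM₁.biUnion_subset hF)
  have hDcard : #D + #(S ∩ M₁.biUnion id) = #S + (p + 2) * #M₁ := by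
    rw [card_union_add_card_inter, hM₁.card_biUnion hF]
  have hinter : #(S ∩ M₀.biUnion id) ≤ #(S ∩ M₁.biUnion id) :=
    card_le_card (inter_subset_inter_left (biUnion_subset_biUnion_of_subset_left id hM₀₁))
  have hVD := card_sdiff_add_card_eq_card hDV
  have hrest : (p + 3) * q ≤ #(V \ D) := by
    have : (p + 2) * #M₁ ≤ (p + 2) * #B := by gcongr; omega
    nlinarith
  obtain ⟨M₂, hM₂, hM₂card⟩ := exists_isMatching_card_lt
    (F := F ∩ (V \ D).powersetCard (p + 2)) inter_subset_right hrest fun u hu => by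
      obtain ⟨huV, huD⟩ := mem_sdiff.1 hu
      have huB : u ∉ B := fun h => huD <| by
        by_cases huS : u ∈ S
        · exact mem_union_left _ huS
        · exact mem_union_right _ (hcover (mem_sdiff.2 ⟨h, huS⟩))
      refine lt_of_le_of_lt ?_ (hgood u (mem_sdiff.2 ⟨huV, huB⟩))
      gcongr
      refine degree_mono ?_ u
      rw [sdiff_inter_self_right]
      exact sdiff_subset_sdiff (powersetCard_mono sdiff_subset) Subset.rfl
  have hM₂F : IsMatching F M₂ := hM₂.mono inter_subset_left
  have hdisj : Disjoint (M₁.biUnion id) (M₂.biUnion id) :=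
    disjoint_of_subset_left subset_union_right
      (disjoint_of_subset_right (hM₂.biUnion_subset inter_subset_right) disjoint_sdiff)
  refine ⟨M₁ ∪ M₂, hM₁.union hM₂F hdisj, ?_⟩
  rw [hM₁.card_union hM₂F hdisj hF]
  linarith

end Absorption

section Links

/-! ### Edges meeting a set through pairwise intersecting links -/

variable {α : Type*} [DecidableEq α] {V S A : Finset α} {F M : Finset (Finset α)} {x y : α}
  {N j : ℕ}

lemma IsMatching.not_disjoint_biUnion (hM : IsMatching F M) (hF : ∀ A ∈ F, ¬Disjoint A S)
    (hmax : ∀ M', IsMatching F M' → #(S ∩ M'.biUnion id) ≤ #(S ∩ M.biUnion id)) (hA : A ∈ F) :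
    ¬Disjoint A (M.biUnion id) := by
  intro hdisj
  obtain ⟨x, hxA, hxS⟩ := not_disjoint_iff.1 (hF A hA)
  refine (hmax _ (hM.insert hA hdisj)).not_gt (card_lt_card ?_)
  rw [biUnion_insert, ssubset_iff_of_subset (inter_subset_inter_left subset_union_right)]
  exact ⟨x, mem_inter.2 ⟨hxS, mem_union_left _ hxA⟩,
    fun h => disjoint_left.1 hdisj hxA (mem_inter.1 h).2⟩

lemma eq_of_forall_isMatching_card_inter_le_one
    (hone : ∀ M, IsMatching {A ∈ F | ¬Disjoint A S} M → #(S ∩ M.biUnion id) ≤ 1)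
    (hA : A ∈ F) (hxS : x ∈ S) (hyS : y ∈ S) (hxA : x ∈ A) (hyA : y ∈ A) : x = y := by
  have hle := hone {A} (.singleton (mem_filter.2 ⟨hA, not_disjoint_iff.2 ⟨x, hxA, hxS⟩⟩))
  rw [singleton_biUnion] at hle
  exact card_le_one.1 hle x (mem_inter.2 ⟨hxS, hxA⟩) y (mem_inter.2 ⟨hyS, hyA⟩)

lemma not_disjoint_of_forall_isMatching_card_inter_le_one {B : Finset α}
    (hone : ∀ M, IsMatching {A ∈ F | ¬Disjoint A S} M → #(S ∩ M.biUnion id) ≤ 1)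
    (hA : A ∈ F) (hB : B ∈ F) (hxS : x ∈ S) (hyS : y ∈ S) (hxA : x ∈ A) (hyB : y ∈ B)
    (hxy : x ≠ y) : ¬Disjoint A B := by
  intro hdisj
  have hB' : IsMatching {A ∈ F | ¬Disjoint A S} {B} :=
    .singleton (mem_filter.2 ⟨hB, not_disjoint_iff.2 ⟨y, hyB, hyS⟩⟩)
  have hle := hone _ (hB'.insert
    (mem_filter.2 ⟨hA, not_disjoint_iff.2 ⟨x, hxA, hxS⟩⟩) (by rwa [singleton_biUnion]))
  rw [biUnion_insert, singleton_biUnion] at hle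
  exact hxy (card_le_one.1 hle x (mem_inter.2 ⟨hxS, mem_union_left _ hxA⟩)
    y (mem_inter.2 ⟨hyS, mem_union_right _ hyB⟩))

lemma memberSubfamily_subset_powersetCard_sdiff (hF : F ⊆ V.powersetCard (j + 1)) (hxS : x ∈ S)
    (hone : ∀ M, IsMatching {A ∈ F | ¬Disjoint A S} M → #(S ∩ M.biUnion id) ≤ 1) :
    F.memberSubfamily x ⊆ (V \ S).powersetCard j := by
  intro a ha
  obtain ⟨haF, hxa⟩ := mem_memberSubfamily.1 ha
  obtain ⟨hsub, hcard⟩ := mem_powersetCard.1 (hF haF)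
  rw [card_insert_of_notMem hxa] at hcard
  refine mem_powersetCard.2 ⟨fun z hz => mem_sdiff.2 ⟨hsub (mem_insert_of_mem hz), ?_⟩, by omega⟩
  rintro hzS
  rw [← eq_of_forall_isMatching_card_inter_le_one hone haF hxS hzS (mem_insert_self x a)
    (mem_insert_of_mem hz)] at hz
  exact hxa hz

lemma crossIntersecting_memberSubfamily (hxS : x ∈ S) (hyS : y ∈ S) (hxy : x ≠ y)
    (hone : ∀ M, IsMatching {A ∈ F | ¬Disjoint A S} M → #(S ∩ M.biUnion id) ≤ 1) :
    CrossIntersecting (F.memberSubfamily x) (F.memberSubfamily y) := by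
  intro a ha b hb hdisj
  obtain ⟨haF, -⟩ := mem_memberSubfamily.1 ha
  obtain ⟨hbF, -⟩ := mem_memberSubfamily.1 hb
  have hx := mem_insert_self x a
  have hy := mem_insert_self y b
  refine not_disjoint_of_forall_isMatching_card_inter_le_one hone haF hbF hxS hyS hx hy hxy ?_
  rw [disjoint_insert_left, disjoint_insert_right]
  exact ⟨fun h => hxy (eq_of_forall_isMatching_card_inter_le_one hone hbF hxS hyS h hy),
    fun h => hxy (eq_of_forall_isMatching_card_inter_le_one hone haF hxS hyS hx
      (mem_insert_of_mem h)), hdisj⟩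

theorem card_le_choose_add_crossBound (hF : F ⊆ V.powersetCard (j + 3)) (hSV : S ⊆ V)
    (hV : #V = N + #S) (hS : 2 ≤ #S) (hcover : ∀ v ∈ S, ∃ A ∈ F, v ∈ A)
    (hone : ∀ M, IsMatching {A ∈ F | ¬Disjoint A S} M → #(S ∩ M.biUnion id) ≤ 1)
    (hN : j + 2 ≤ N) (hlarge : 3 * (j + 2) ^ 2 * N ^ j ≤ (N - 1).choose (j + 1)) :
    #F ≤ N.choose (j + 3) + crossBound N j (#S) := by
  have hVS : #(V \ S) = N := by rw [card_sdiff_of_subset hSV]; omega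
  have hlinks : ∑ x ∈ S, #(F.memberSubfamily x) ≤ crossBound (#(V \ S)) j (#S) := by
    refine sum_card_le_crossBound hS
      (fun x hx => memberSubfamily_subset_powersetCard_sdiff hF hx hone) (fun x hx => ?_)
      (fun x hx y hy hxy => crossIntersecting_memberSubfamily hx hy hxy hone) (by omega)
      (by rwa [hVS])
    obtain ⟨A, hA, hxA⟩ := hcover x hx
    exact ⟨A.erase x, mem_memberSubfamily.2 ⟨by rwa [insert_erase hxA], notMem_erase x A⟩⟩
  rw [hVS, sum_congr rfl fun x _ => card_memberSubfamily F x] at hlinks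
  calc #F ≤ (#V - #S).choose (j + 3) + ∑ x ∈ S, degree F x :=
        card_le_choose_add_sum_degree hF hSV
    _ ≤ N.choose (j + 3) + crossBound N j (#S) := by
        rw [hV, Nat.add_sub_cancel]
        gcongr

end Links

section Stability

/-! ### Poor and bad vertices of a large family -/

variable {α : Type*} [DecidableEq α] {V : Finset α} {F M M₀ : Finset (Finset α)} {v : α}
  {C N b j m p q s : ℕ}

/-- The vertices lying in fewer than `#V ^ (p + 1) / (4 * C)` edges of the `(p + 2)`-uniform
family `F`. With `C` a large constant they are the only candidates for vertices missed by a
near-perfect matching. -/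
def poorVertices (C p : ℕ) (V : Finset α) (F : Finset (Finset α)) : Finset α :=
  {v ∈ V | 4 * C * degree F v < #V ^ (p + 1)}

/-- The vertices lying in more than `#V ^ (p + 1) / (2 * (p + 2) * C)` of the `(p + 2)`-subsets
of `V` that are not edges of `F`. -/
def badVertices (C p : ℕ) (V : Finset α) (F : Finset (Finset α)) : Finset α :=
  {v ∈ V | #V ^ (p + 1) < 2 * (p + 2) * C * degree (V.powersetCard (p + 2) \ F) v}

lemma card_powersetCard_sdiff_le (hF : F ⊆ V.powersetCard (p + 1)) (hV : #V = N + m)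
    (hN : N.choose (p + 1) ≤ #F) : #(V.powersetCard (p + 1) \ F) ≤ m * #V ^ p := by
  have hchoose := choose_add_le N p m
  rw [← hV] at hchoose
  rw [card_sdiff_of_subset hF, card_powersetCard]
  omega

lemma card_badVertices_le (hV : 0 < #V)
    (hmissing : #(V.powersetCard (p + 2) \ F) ≤ m * #V ^ (p + 1)) :
    #(badVertices C p V F) ≤ 2 * (p + 2) ^ 2 * C * m := by
  set missing := V.powersetCard (p + 2) \ F
  refine Nat.le_of_mul_le_mul_right ?_ (Nat.pow_pos hV : 0 < #V ^ (p + 1))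
  calc #(badVertices C p V F) * #V ^ (p + 1)
      ≤ ∑ v ∈ badVertices C p V F, 2 * (p + 2) * C * degree missing v :=
        card_nsmul_le_sum _ _ _ fun v hv => (mem_filter.1 hv).2.le
    _ ≤ ∑ v ∈ V, 2 * (p + 2) * C * degree missing v := sum_le_sum_of_subset (filter_subset _ _)
    _ = 2 * (p + 2) * C * ((p + 2) * #missing) := by rw [← mul_sum, sum_degree sdiff_subset]
    _ ≤ 2 * (p + 2) * C * ((p + 2) * (m * #V ^ (p + 1))) := by gcongr
    _ = 2 * (p + 2) ^ 2 * C * m * #V ^ (p + 1) := by ring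

lemma poorVertices_subset_badVertices (hF : F ⊆ V.powersetCard (p + 2))
    (hC : #V ^ (p + 1) ≤ C * (#V - 1).choose (p + 1)) :
    poorVertices C p V F ⊆ badVertices C p V F := by
  intro v hv
  obtain ⟨hvV, hpoor⟩ := mem_filter.1 hv
  refine mem_filter.2 ⟨hvV, ?_⟩
  rw [← degree_sdiff_add_degree hF hvV] at hC
  nlinarith [Nat.zero_le (p * (C * degree (V.powersetCard (p + 2) \ F) v))]

lemma mul_degree_sdiff_lt_choose (hV : 0 < #V) (hC : #V ^ (p + 1) ≤ C * q.choose (p + 1))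
    (hv : v ∈ V \ badVertices C p V F) :
    (p + 2) * degree (V.powersetCard (p + 2) \ F) v < q.choose (p + 1) := by
  obtain ⟨hvV, hgood⟩ := mem_sdiff.1 hv
  have hpos : 0 < C * q.choose (p + 1) := (Nat.pow_pos hV).trans_le hC
  have hle : 2 * (p + 2) * C * degree (V.powersetCard (p + 2) \ F) v ≤ #V ^ (p + 1) :=
    not_lt.1 fun h => hgood (mem_filter.2 ⟨hvV, h⟩)
  have hmul : C * (2 * ((p + 2) * degree (V.powersetCard (p + 2) \ F) v))
      ≤ C * q.choose (p + 1) := by linarith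
  have := Nat.le_of_mul_le_mul_left hmul (Nat.pos_of_mul_pos_right hpos)
  have := Nat.pos_of_mul_pos_left hpos
  omega

lemma lt_degree_of_notMem_poorVertices (hvV : v ∈ V) (hv : v ∉ poorVertices C p V F)
    (hb : 4 * C * b < #V) : b * #V ^ p < degree F v := by
  have hle : #V ^ (p + 1) ≤ 4 * C * degree F v := not_lt.1 fun h => hv (mem_filter.2 ⟨hvV, h⟩)
  refine Nat.lt_of_mul_lt_mul_left (a := 4 * C) ?_
  calc 4 * C * (b * #V ^ p) = 4 * C * b * #V ^ p := by ring
    _ < #V * #V ^ p := by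
        gcongr
        exact Nat.pow_pos (by omega)
    _ = #V ^ (p + 1) := by ring
    _ ≤ 4 * C * degree F v := hle

lemma mul_card_badVertices_le (hF : F ⊆ V.powersetCard (p + 2)) (hV : #V = N + m) (hm : 0 < m)
    (hN : N.choose (p + 2) ≤ #F) (hm' : 16 * (p + 2) ^ 3 * C ^ 2 * m ≤ #V) :
    8 * (p + 2) * C * #(badVertices C p V F) ≤ #V :=
  calc 8 * (p + 2) * C * #(badVertices C p V F)
      ≤ 8 * (p + 2) * C * (2 * (p + 2) ^ 2 * C * m) :=
        Nat.mul_le_mul_left _ (card_badVertices_le (by omega) (card_powersetCard_sdiff_le hF hV hN))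
    _ = 16 * (p + 2) ^ 3 * C ^ 2 * m := by ring
    _ ≤ #V := hm'

theorem card_add_card_poorVertices_inter_le (hF : F ⊆ V.powersetCard (p + 2)) (hV : 0 < #V)
    (hν : ∀ M, IsMatching F M → #M ≤ s) (hC : #V ^ (p + 1) ≤ C * q.choose (p + 1))
    (hq : 4 * (p + 2) * q ≤ #V) (hbad : 8 * (p + 2) * C * #(badVertices C p V F) ≤ #V)
    (hpoor : poorVertices C p V F ⊆ badVertices C p V F) (hM₀ : IsMatching F M₀)
    (hM₀card : #M₀ ≤ #(poorVertices C p V F)) :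
    #V + #(poorVertices C p V F ∩ M₀.biUnion id)
      ≤ (p + 2) * s + (p + 1) + #(poorVertices C p V F) := by
  set S := poorVertices C p V F
  set B := badVertices C p V F
  have hCpos : 0 < C := Nat.pos_of_mul_pos_right ((Nat.pow_pos hV).trans_le hC)
  have hCB : (p + 2) * #B ≤ (p + 2) * C * #B := by nlinarith [Nat.zero_le ((p + 2) * #B)]
  have hmid : ∀ v ∈ B \ S, (p + 2) * #B * #V ^ p < degree F v := fun v hv =>
    have hv := mem_sdiff.1 hv
    lt_degree_of_notMem_poorVertices (filter_subset _ _ hv.1) hv.2 (by linarith)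
  have hsize : (p + 3) * (q + #B) ≤ #V := by nlinarith
  obtain ⟨M, hM, hMcard⟩ := exists_isMatching_card_add_card_inter_le hF hpoor (filter_subset _ _)
    (fun v hv => mul_degree_sdiff_lt_choose hV hC hv) hmid hsize hM₀ hM₀card
  have := Nat.mul_le_mul_left (p + 2) (hν M hM)
  omega

lemma mul_sum_degree_poorVertices_le (hF : F ⊆ V.powersetCard (p + 2))
    (hpoor : 4 * (p + 2) * C * #(poorVertices C p V F) ≤ #V)
    (hM : IsMatching {A ∈ F | ¬Disjoint A (poorVertices C p V F)} M)
    (hmax : ∀ M', IsMatching {A ∈ F | ¬Disjoint A (poorVertices C p V F)} M' →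
      #(poorVertices C p V F ∩ M'.biUnion id) ≤ #(poorVertices C p V F ∩ M.biUnion id)) :
    4 * C * ∑ v ∈ poorVertices C p V F, degree F v
      ≤ 2 * #(poorVertices C p V F ∩ M.biUnion id) * #V ^ (p + 1) := by
  set S := poorVertices C p V F
  set T := M.biUnion id
  have hmeets : ∀ A ∈ {A ∈ F | ¬Disjoint A S}, ¬Disjoint A S := fun A hA => (mem_filter.1 hA).2
  have hT : #T ≤ (p + 2) * #(S ∩ T) := by
    rw [hM.card_biUnion ((filter_subset _ _).trans hF)]
    exact Nat.mul_le_mul_left _ (hM.card_le_card_inter_biUnion fun A hA => hmeets A (hM.subset hA))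
  have hinside : ∑ v ∈ S ∩ T, 4 * C * degree F v ≤ #(S ∩ T) * #V ^ (p + 1) :=
    sum_le_card_nsmul _ _ _ fun v hv => (mem_filter.1 (mem_inter.1 hv).1).2.le
  have hdegree : ∀ v ∈ S \ T, degree F v ≤ #T * #V ^ p := by
    intro v hv
    obtain ⟨hvS, hvT⟩ := mem_sdiff.1 hv
    exact degree_le_card_mul_pow hF hvT fun A hA hvA => hM.not_disjoint_biUnion hmeets hmax
      (mem_filter.2 ⟨hA, not_disjoint_iff.2 ⟨v, hvA, hvS⟩⟩)
  have houtside : ∑ v ∈ S \ T, 4 * C * degree F v ≤ #(S ∩ T) * #V ^ (p + 1) :=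
    calc ∑ v ∈ S \ T, 4 * C * degree F v
        ≤ #(S \ T) * (4 * C * (#T * #V ^ p)) :=
          sum_le_card_nsmul _ _ _ fun v hv => Nat.mul_le_mul_left _ (hdegree v hv)
      _ ≤ #S * (4 * C * ((p + 2) * #(S ∩ T) * #V ^ p)) := by
          gcongr
          exact sdiff_subset
      _ = 4 * (p + 2) * C * #S * (#(S ∩ T) * #V ^ p) := by ring
      _ ≤ #V * (#(S ∩ T) * #V ^ p) := by gcongr
      _ = #(S ∩ T) * #V ^ (p + 1) := by ring
  rw [mul_sum, ← sum_inter_add_sum_sdiff S T]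
  linarith

lemma card_le_choose_of_sum_degree_le {S : Finset α} {d : ℕ} (hF : F ⊆ V.powersetCard (p + 1))
    (hSV : S ⊆ V) (hq : q + #S ≤ #V) (hsum : ∑ v ∈ S, degree F v ≤ d * q.choose p) :
    #F ≤ (#V - #S + d).choose (p + 1) :=
  calc #F ≤ (#V - #S).choose (p + 1) + ∑ v ∈ S, degree F v :=
        card_le_choose_add_sum_degree hF hSV
    _ ≤ (#V - #S).choose (p + 1) + d * (#V - #S).choose p := by
        gcongr
        exact hsum.trans (Nat.mul_le_mul_left _ (Nat.choose_mono p (by omega)))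
    _ ≤ (#V - #S + d).choose (p + 1) := choose_add_mul_choose_le _ _ _

lemma sum_degree_poorVertices_le {d : ℕ} (hF : F ⊆ V.powersetCard (p + 2)) (hV : 0 < #V)
    (hC : #V ^ (p + 1) ≤ C * q.choose (p + 1))
    (hpoor : 4 * (p + 2) * C * #(poorVertices C p V F) ≤ #V)
    (hM : IsMatching {A ∈ F | ¬Disjoint A (poorVertices C p V F)} M)
    (hmax : ∀ M', IsMatching {A ∈ F | ¬Disjoint A (poorVertices C p V F)} M' →
      #(poorVertices C p V F ∩ M'.biUnion id) ≤ #(poorVertices C p V F ∩ M.biUnion id))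
    (hd : #(poorVertices C p V F ∩ M.biUnion id) ≤ 2 * d) :
    ∑ v ∈ poorVertices C p V F, degree F v ≤ d * q.choose (p + 1) := by
  have hCpos : 0 < C := Nat.pos_of_mul_pos_right ((Nat.pow_pos hV).trans_le hC)
  refine Nat.le_of_mul_le_mul_left ?_ (show 0 < 4 * C by omega)
  calc 4 * C * ∑ v ∈ poorVertices C p V F, degree F v
      ≤ 2 * #(poorVertices C p V F ∩ M.biUnion id) * #V ^ (p + 1) :=
        mul_sum_degree_poorVertices_le hF hpoor hM hmax
    _ ≤ 2 * (2 * d) * (C * q.choose (p + 1)) := by gcongr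
    _ = 4 * C * (d * q.choose (p + 1)) := by ring

lemma card_inter_biUnion_pos {S A : Finset α} {v : α} (hA : A ∈ F) (hvA : v ∈ A) (hvS : v ∈ S)
    (hmax : ∀ M', IsMatching {A ∈ F | ¬Disjoint A S} M' →
      #(S ∩ M'.biUnion id) ≤ #(S ∩ M.biUnion id)) :
    0 < #(S ∩ M.biUnion id) := by
  refine (card_pos.2 ⟨v, ?_⟩).trans_le (hmax {A} (.singleton (mem_filter.2 ⟨hA, ?_⟩)))
  · simpa only [singleton_biUnion, id, mem_inter] using ⟨hvS, hvA⟩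
  · exact not_disjoint_iff.2 ⟨v, hvA, hvS⟩

lemma exists_isMatching_card_add_card_poorVertices_inter_le (hF : F ⊆ V.powersetCard (p + 2))
    (hV : 0 < #V) (hν : ∀ M, IsMatching F M → #M ≤ s)
    (hC : #V ^ (p + 1) ≤ C * q.choose (p + 1)) (hq : 4 * (p + 2) * q ≤ #V)
    (hbad : 8 * (p + 2) * C * #(badVertices C p V F) ≤ #V)
    (hpoor : poorVertices C p V F ⊆ badVertices C p V F) :
    ∃ M, IsMatching {A ∈ F | ¬Disjoint A (poorVertices C p V F)} M ∧
      (∀ M', IsMatching {A ∈ F | ¬Disjoint A (poorVertices C p V F)} M' →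
        #(poorVertices C p V F ∩ M'.biUnion id) ≤ #(poorVertices C p V F ∩ M.biUnion id)) ∧
      #V + #(poorVertices C p V F ∩ M.biUnion id)
        ≤ (p + 2) * s + (p + 1) + #(poorVertices C p V F) := by
  set S := poorVertices C p V F
  obtain ⟨M, hM, hmax⟩ := exists_isMatching_forall_le {A ∈ F | ¬Disjoint A S}
    fun M => #(S ∩ M.biUnion id)
  have hMcard : #M ≤ #(S ∩ M.biUnion id) :=
    hM.card_le_card_inter_biUnion fun A hA => (mem_filter.1 (hM.subset hA)).2
  exact ⟨M, hM, hmax, card_add_card_poorVertices_inter_le hF hV hν hC hq hbad hpoor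
    (hM.mono (filter_subset _ _)) (hMcard.trans (card_le_card inter_subset_left))⟩

end Stability

theorem card_le_choose_add_crossBound_of_isMatching_card_le {α : Type*} {V : Finset α}
    {F : Finset (Finset α)} {C N j m q s : ℕ} (hF : F ⊆ V.powersetCard (j + 3))
    (hcover : ∀ v ∈ V, ∃ A ∈ F, v ∈ A) (hν : ∀ M, IsMatching F M → #M ≤ s) (hs : 0 < s)
    (hV : #V = N + m) (hm : 2 ≤ m) (hN : N + 2 = (j + 3) * s + (j + 3))
    (hC : #V ^ (j + 2) ≤ C * q.choose (j + 2)) (hq : 4 * (j + 3) * q ≤ #V)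
    (hm' : 16 * (j + 3) ^ 3 * C ^ 2 * m ≤ #V)
    (hlarge : 3 * (j + 2) ^ 2 * N ^ j ≤ (N - 1).choose (j + 1)) :
    #F ≤ N.choose (j + 3) + crossBound N j m := by
  classical
  by_contra! hlt
  have hFcard : N.choose (j + 3) < #F := (Nat.le_add_right _ _).trans_lt hlt
  have hVpos : 0 < #V := by omega
  have hbad := mul_card_badVertices_le hF hV (by omega) hFcard.le hm'
  have hqV : 2 * q ≤ #V := by linarith [Nat.zero_le (j * q)]
  have hSB : poorVertices C (j + 1) V F ⊆ badVertices C (j + 1) V F :=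
    poorVertices_subset_badVertices hF
      (hC.trans (Nat.mul_le_mul_left C (Nat.choose_mono _ (by omega))))
  set S := poorVertices C (j + 1) V F
  have hSV : S ⊆ V := filter_subset _ _
  have hSsmall : 8 * (j + 3) * C * #S ≤ #V :=
    (Nat.mul_le_mul_left _ (card_le_card hSB)).trans hbad
  obtain ⟨M, hM, hmax, hcard⟩ :
      ∃ M, IsMatching {A ∈ F | ¬Disjoint A S} M ∧ (∀ M', IsMatching {A ∈ F | ¬Disjoint A S} M' →
        #(S ∩ M'.biUnion id) ≤ #(S ∩ M.biUnion id)) ∧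
        #V + #(S ∩ M.biUnion id) ≤ (j + 3) * s + (j + 2) + #S :=
    exists_isMatching_card_add_card_poorVertices_inter_le hF hVpos hν hC hq hbad hSB
  have hpos : 0 < #(S ∩ M.biUnion id) := by
    obtain ⟨v, hv⟩ := card_pos.1 (show 0 < #S by omega)
    obtain ⟨A, hA, hvA⟩ := hcover v (hSV hv)
    exact card_inter_biUnion_pos hA hvA hv hmax
  obtain hSm | hSm : #S = m ∨ m < #S := by omega
  · refine hlt.not_ge (hSm ▸ card_le_choose_add_crossBound hF hSV (by omega) (by omega)
      (fun v hv => hcover v (hSV hv)) (fun M' hM' => (hmax M' hM').trans (by omega)) ?_ hlarge)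
    nlinarith
  · have hsum : ∑ v ∈ S, degree F v ≤ (#S - m) * q.choose (j + 2) :=
      sum_degree_poorVertices_le hF hVpos hC (hSsmall.trans' (by gcongr; omega)) hM hmax
        (show #(S ∩ M.biUnion id) ≤ 2 * (#S - m) by omega)
    have hCpos : 0 < C := Nat.pos_of_mul_pos_right ((Nat.pow_pos hVpos).trans_le hC)
    have hkC : 1 ≤ (j + 3) * C := Nat.mul_pos (by omega) hCpos
    have hqS : q + #S ≤ #V := by nlinarith
    have hle := card_le_choose_of_sum_degree_le hF hSV hqS hsum
    rw [show #V - #S + (#S - m) = N by omega] at hle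
    exact hFcard.not_ge hle

section Extremal

/-! ### The extremal families -/

variable {n j s N : ℕ}

lemma insert_inj_of_subset {α : Type*} [DecidableEq α] {W A B : Finset α} {x y : α} (hx : x ∉ W)
    (hy : y ∉ W) (hA : A ⊆ W) (hB : B ⊆ W) (h : insert x A = insert y B) : x = y ∧ A = B := by
  obtain rfl : x = y := by
    have hxB : x ∈ insert y B := h ▸ mem_insert_self x A
    exact (mem_insert.1 hxB).resolve_right fun hx' => hx (hB hx')
  refine ⟨rfl, ?_⟩
  rw [← erase_insert fun h' => hx (hA h'), h, erase_insert fun h' => hx (hB h')]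

lemma card_union_image₂_insert {α : Type*} [DecidableEq α] {W X : Finset α}
    {𝒜 𝒢 : Finset (Finset α)} (hX : Disjoint X W) (h𝒜 : ∀ A ∈ 𝒜, A ⊆ W) (h𝒢 : ∀ A ∈ 𝒢, A ⊆ W) :
    #(𝒜 ∪ image₂ insert X 𝒢) = #𝒜 + #X * #𝒢 := by
  have hXW {x : α} (hx : x ∈ X) : x ∉ W := disjoint_left.1 hX hx
  rw [card_union_of_disjoint, card_image₂_iff.2]
  · rintro ⟨x, A⟩ hxA ⟨y, B⟩ hyB h
    obtain ⟨hx, hA⟩ : x ∈ X ∧ A ∈ 𝒢 := hxA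
    obtain ⟨hy, hB⟩ : y ∈ X ∧ B ∈ 𝒢 := hyB
    exact Prod.ext_iff.2 (insert_inj_of_subset (hXW hx) (hXW hy) (h𝒢 A hA) (h𝒢 B hB) h)
  · refine disjoint_left.2 fun A hA hA' => ?_
    obtain ⟨x, hx, B, -, rfl⟩ := mem_image₂.1 hA'
    exact hXW hx (h𝒜 _ hA (mem_insert_self x B))

lemma insert_mem_powersetCard_Icc {A : Finset ℕ} {x p : ℕ} (hNx : N < x) (hxn : x ≤ n)
    (hA : A ∈ (Icc 1 N).powersetCard p) :
    insert x A ∈ (Icc 1 n).powersetCard (p + 1) ∧ insert x A \ Icc 1 N = {x} := by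
  obtain ⟨hAN, hAcard⟩ := mem_powersetCard.1 hA
  have hxN : x ∉ Icc 1 N := by simp [hNx]
  refine ⟨mem_powersetCard.2 ⟨insert_subset (mem_Icc.2 ⟨by omega, hxn⟩)
    (hAN.trans (Icc_subset_Icc_right (by omega))), ?_⟩, ?_⟩
  · rw [card_insert_of_notMem fun h => hxN (hAN h), hAcard]
  · rw [insert_sdiff_of_notMem _ hxN, sdiff_eq_empty_iff_subset.2 hAN, insert_empty]

lemma union_image₂_insert_subset_E0 (hN : N + 2 = (j + 3) * s + (j + 3)) (hn : N < n) :
    (Icc 1 N).powersetCard (j + 3) ∪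
      image₂ insert {N + 1} {A ∈ (Icc 1 N).powersetCard (j + 2) | ¬Disjoint A (Icc 1 (j + 2))} ∪
      image₂ insert (Icc (N + 2) n) {Icc 1 (j + 2)} ⊆ E0 n (j + 3) s := by
  rw [E0, ← hN, Nat.add_sub_cancel, show N + 2 - 1 = N + 1 by omega,
    show j + 3 - 1 = j + 2 by omega, image₂_singleton_right]
  refine union_subset_union (union_subset_union_right (image₂_subset_iff.2 ?_)) subset_rfl
  intro x hx A hA
  obtain rfl := mem_singleton.1 hx
  obtain ⟨hA, hmeet⟩ := mem_filter.1 hA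
  obtain ⟨hmem, hsdiff⟩ := insert_mem_powersetCard_Icc N.lt_succ_self hn hA
  exact mem_filter.2 ⟨hmem, hsdiff, (not_disjoint_iff_nonempty_inter.1 hmeet).mono
    (inter_subset_inter_right (subset_insert _ _))⟩

lemma choose_add_le_card_E0 (hN : N + 2 = (j + 3) * s + (j + 3)) (hn : N < n)
    (hjN : j + 2 ≤ N) :
    N.choose (j + 3) + (N.choose (j + 2) - (N - (j + 2)).choose (j + 2) + (n - N - 1))
      ≤ #(E0 n (j + 3) s) := by
  refine le_trans (le_of_eq ?_) (card_le_card (union_image₂_insert_subset_E0 hN hn))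
  set 𝒢 : Finset (Finset ℕ) := {A ∈ (Icc 1 N).powersetCard (j + 2) | ¬Disjoint A (Icc 1 (j + 2))}
  have hcore : ∀ A ∈ (Icc 1 N).powersetCard (j + 3), A ⊆ Icc 1 N :=
    fun A hA => (mem_powersetCard.1 hA).1
  have h𝒢 : ∀ A ∈ 𝒢, A ⊆ Icc 1 N := fun A hA => (mem_powersetCard.1 (mem_filter.1 hA).1).1
  have hNN : Icc 1 N ⊆ Icc 1 (N + 1) := Icc_subset_Icc_right N.le_succ
  have hinner : ∀ A ∈ (Icc 1 N).powersetCard (j + 3) ∪ image₂ insert {N + 1} 𝒢,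
      A ⊆ Icc 1 (N + 1) := by
    refine forall_mem_union.2 ⟨fun A hA => (hcore A hA).trans hNN, forall_mem_image₂.2 ?_⟩
    intro x hx A hA
    obtain rfl := mem_singleton.1 hx
    exact insert_subset (by simp) ((h𝒢 A hA).trans hNN)
  have h𝒢card : #𝒢 + (N - (j + 2)).choose (j + 2) = N.choose (j + 2) := by
    simpa using card_filter_not_disjoint_add_choose (Icc_subset_Icc_right hjN (a := 1)) (j + 2)
  rw [card_union_image₂_insert (W := Icc 1 (N + 1)) ?_ hinner ?_,
    card_union_image₂_insert (W := Icc 1 N) (by simp) hcore h𝒢]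
  · simp only [card_powersetCard, card_singleton, Nat.card_Icc, Nat.add_sub_cancel]
    omega
  · exact disjoint_left.2 fun x hx hx' => by simp only [mem_Icc] at hx hx'; omega
  · simpa using Icc_subset_Icc_right (hjN.trans N.le_succ)

lemma union_image₂_insert_subset_E1 (hN : N + 2 = (j + 3) * s + (j + 3)) :
    (Icc 1 N).powersetCard (j + 3) ∪
      image₂ insert (Icc (N + 1) n) {A ∈ (Icc 1 N).powersetCard (j + 2) | 1 ∈ A}
      ⊆ E1 n (j + 3) s := by
  rw [E1, ← hN, Nat.add_sub_cancel, show N + 2 - 1 = N + 1 by omega]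
  refine union_subset_union_right (image₂_subset_iff.2 ?_)
  intro x hx A hA
  obtain ⟨hA, hA1⟩ := mem_filter.1 hA
  obtain ⟨hNx, hxn⟩ := mem_Icc.1 hx
  obtain ⟨hmem, hsdiff⟩ := insert_mem_powersetCard_Icc hNx hxn hA
  simp only [mem_filter]
  exact ⟨hmem, mem_insert_of_mem hA1, x, hx, hsdiff⟩

lemma choose_add_le_card_E1 (hN : N + 2 = (j + 3) * s + (j + 3)) (hNpos : 0 < N) :
    N.choose (j + 3) + (n - N) * (N - 1).choose (j + 1) ≤ #(E1 n (j + 3) s) := by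
  refine le_trans (le_of_eq ?_) (card_le_card (union_image₂_insert_subset_E1 hN))
  have hstar : #{A ∈ (Icc 1 N).powersetCard (j + 2) | 1 ∈ A} = (N - 1).choose (j + 1) :=
    (degree_powersetCard (mem_Icc.2 ⟨le_refl 1, hNpos⟩) (j + 1)).trans
      (by rw [Nat.card_Icc, Nat.add_sub_cancel])
  rw [card_union_image₂_insert (W := Icc 1 N), card_powersetCard, hstar, Nat.card_Icc, Nat.card_Icc,
    Nat.add_sub_cancel, Nat.add_sub_add_right]
  · exact disjoint_left.2 fun x hx hx' => by simp only [mem_Icc] at hx hx'; omega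
  · exact fun A hA => (mem_powersetCard.1 hA).1
  · exact fun A hA => (mem_powersetCard.1 (mem_filter.1 hA).1).1

theorem choose_add_crossBound_le_max_card (hN : N + 2 = (j + 3) * s + (j + 3)) (hn : N < n)
    (hjN : j + 2 ≤ N) :
    N.choose (j + 3) + crossBound N j (n - N) ≤ max #(E0 n (j + 3) s) #(E1 n (j + 3) s) := by
  rw [crossBound, ← Nat.add_max_add_left]
  exact max_le_max (choose_add_le_card_E0 hN hn hjN) (choose_add_le_card_E1 hN (by omega))

end Extremal

lemma IsMatching.card_le_matchingNumber {F M : Finset (Finset ℕ)} (hM : IsMatching F M) :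
    #M ≤ matchingNumber F := by
  refine le_csSup ⟨#F, ?_⟩ ⟨M, hM.subset, rfl, hM.pairwiseDisjoint⟩
  rintro _ ⟨M', hM', rfl, -⟩
  exact card_le_card hM'

theorem card_le_max_card_E0_E1 {n j s N : ℕ} {F : Finset (Finset ℕ)}
    (hF : F ⊆ (Icc 1 n).powersetCard (j + 3)) (hcover : NonTrivial n F)
    (hν : matchingNumber F ≤ s) (hN : N + 2 = (j + 3) * s + (j + 3)) (hn : N + 2 ≤ n)
    (hs : 8 * (j + 3) + 3 * (j + 2) ^ 2 * (2 ^ (j + 1) * (j + 1)!) < s)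
    (hm : 16 * (j + 3) ^ 3 * ((8 * (j + 3)) ^ (j + 2) * (j + 2)!) ^ 2 * (n - N) ≤ n) :
    #F ≤ max #(E0 n (j + 3) s) #(E1 n (j + 3) s) := by
  have hcard : #(Icc 1 n) = n := by rw [Nat.card_Icc, Nat.add_sub_cancel]
  have hsN : s ≤ N := by nlinarith
  refine le_trans ?_ (choose_add_crossBound_le_max_card hN (by omega) (by omega))
  refine card_le_choose_add_crossBound_of_isMatching_card_le (q := n / (4 * (j + 3))) hF hcover
    (fun M hM => hM.card_le_matchingNumber.trans hν) (by omega) (by omega) (by omega) hN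
    ?_ ?_ (by rwa [hcard]) (mul_pow_le_choose_pred (by omega) (by omega))
  · rw [hcard]
    have hks : 8 * (j + 3) * (j + 3) ≤ s * (j + 3) := Nat.mul_le_mul_right _ (by omega)
    exact pow_le_mul_choose_div (j + 2) (by linarith)
  · rw [hcard]
    exact Nat.mul_div_le n _

lemma mul_sub_le_of_le_one_add_inv_mul {R k s n N : ℕ} (hR : 0 < R) (hN : N + 2 = k * s + k)
    (hNn : N + 2 ≤ n) (hn : (n : ℝ) ≤ (1 + 1 / R) * (k * s) + k - 2) : R * (n - N) ≤ n := by
  have hR' : (0 : ℝ) < R := by exact_mod_cast hR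
  have hN' : (N : ℝ) + 2 = k * s + k := by exact_mod_cast hN
  have hsub : ((n - N : ℕ) : ℝ) ≤ k * s / R := by
    rw [Nat.cast_sub (by omega)]
    linarith [show (1 + 1 / (R : ℝ)) * (k * s) = k * s + k * s / R by ring]
  have hmul : (n - N) * R ≤ k * s := by exact_mod_cast (le_div_iff₀ hR').1 hsub
  linarith

end ErdosMatching

/-- the main stability theorem for almost perfect matchings. -/
theorem stmt0 (k : ℕ) (hk : 3 ≤ k) :
    ∃ (β : ℝ) (s₀ : ℕ), 0 < β ∧ 0 < s₀ ∧
      ∀ (n s : ℕ), s₀ < s → k * s + k ≤ n → (n : ℝ) ≤ (1 + β) * (k * s) + k - 2 →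
        ∀ F ⊆ Finset.powersetCard k (Finset.Icc 1 n),
          NonTrivial n F → matchingNumber F ≤ s →
            F.card ≤ max (E0 n k s).card (E1 n k s).card := by
  obtain ⟨j, rfl⟩ : ∃ j, k = j + 3 := ⟨k - 3, by omega⟩
  set R : ℕ := 16 * (j + 3) ^ 3 * ((8 * (j + 3)) ^ (j + 2) * (j + 2).factorial) ^ 2
  have hRpos : 0 < R := by positivity
  refine ⟨1 / R, 8 * (j + 3) + 3 * (j + 2) ^ 2 * (2 ^ (j + 1) * (j + 1).factorial),
    by positivity, by positivity, ?_⟩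
  intro n s hs hn hnβ F hF hcover hν
  obtain ⟨N, hN⟩ : ∃ N, N + 2 = (j + 3) * s + (j + 3) := ⟨(j + 3) * s + (j + 3) - 2, by omega⟩
  exact ErdosMatching.card_le_max_card_E0_E1 hF hcover hν hN (by omega) hs
    (ErdosMatching.mul_sub_le_of_le_one_add_inv_mul hRpos hN (by omega) hnβ)
end

section
/- For all integers k ≥ 3 and ℓ ≥ 1 there exists a positive integer s₀ such that the following holds. Let n, s be integers with s > s₀ and n = k(s+1) + ℓ. If F ⊆ binom([n],k) is non-trivial and ν(F) ≤ s, then |F| ≤ |E₀(n,k,s)| if k > ℓ + 3, and |F| ≤ |E₁(n,k,s)| if k ≤ ℓ + 3. -/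
/-!
Write `k(s + 1) = m + 2` and `t = ℓ + 2`, so that `n = m + t`, and suppose that `F` has at least
`m.choose k` members. Then only boundedly many vertices miss a positive proportion of the possible
edges through them. Away from these vertices `F` is so dense that every set of suitable size has a
perfect matching: arrange its vertices in a grid with `k` columns so that as many rows as possible
are edges; if some row is not an edge, then it lies together with `k - 1` other rows in a square
subgrid all of whose columns are edges, and transposing that subgrid produces more edges.

Deficient vertices of not too small degree can be covered greedily. So if a bounded matching left
only `ℓ` of the remaining set `S` of low-degree vertices uncovered, it would extend to a matching
of `s + 1` edges. Since the size of `F` forces `#S ≤ t`, this means that `#S = t` and that no two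
disjoint edges cover two vertices of `S`. Hence the links of the vertices in `S` are nonempty
cross-intersecting families on the other `m` vertices. The sum of their sizes is largest either for
one large family and `t - 1` singletons, which gives `E₀`, or for `t` equal stars, which gives `E₁`.
-/

open Finset
open Filter (atTop eventually_atTop eventually_ge_atTop eventually_gt_atTop)

variable {α ι κ : Type*}

section Binomial

theorem choose_add_succ_le (a j r : ℕ) :
    (a + j).choose (r + 1) ≤ a.choose (r + 1) + j * (a + j - 1).choose r := by
  induction j with
  | zero => simp
  | succ j ih =>
    have hmono : (a + j - 1).choose r ≤ (a + j).choose r := Nat.choose_le_choose _ (by omega)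
    rw [← add_assoc, Nat.choose_succ_succ', Nat.add_sub_cancel]
    nlinarith [Nat.mul_le_mul_left j hmono]

theorem le_choose_add_succ (a j r : ℕ) :
    a.choose (r + 1) + j * a.choose r ≤ (a + j).choose (r + 1) := by
  induction j with
  | zero => simp
  | succ j ih =>
    have hmono : a.choose r ≤ (a + j).choose r := Nat.choose_le_add _ _ _
    rw [← add_assoc, Nat.choose_succ_succ']
    linarith

theorem choose_add_le_two_pow_mul_choose {m r : ℕ} (hm : 2 * r ≤ m) (c : ℕ) :
    (m + c).choose r ≤ 2 ^ c * m.choose r := by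
  induction c with
  | zero => simp
  | succ c ih =>
    have hdouble : (m + c + 1).choose r ≤ 2 * (m + c).choose r := by
      refine Nat.le_of_mul_le_mul_right ?_ (show 0 < m + c + 1 - r by omega)
      rw [← Nat.choose_mul_succ_eq, mul_comm 2, mul_assoc]
      exact Nat.mul_le_mul_left _ (by omega)
    calc (m + c + 1).choose r ≤ 2 * (m + c).choose r := hdouble
      _ ≤ 2 * (2 ^ c * m.choose r) := Nat.mul_le_mul_left _ ih
      _ = 2 ^ (c + 1) * m.choose r := by ring

theorem eventually_mul_choose_lt_choose_succ (K c r : ℕ) :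
    ∀ᶠ m : ℕ in atTop, K * (m + c).choose r < m.choose (r + 1) := by
  filter_upwards [eventually_gt_atTop (K * 2 ^ c * (r + 1) + 2 * r)] with m hm
  refine Nat.lt_of_mul_lt_mul_right (a := r + 1) ?_
  calc K * (m + c).choose r * (r + 1) ≤ K * (2 ^ c * m.choose r) * (r + 1) := by
        gcongr
        exact choose_add_le_two_pow_mul_choose (by omega) c
    _ = m.choose r * (K * 2 ^ c * (r + 1)) := by ring
    _ < m.choose r * (m - r) :=
        Nat.mul_lt_mul_of_pos_left (by omega) (Nat.choose_pos (by omega))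
    _ = m.choose (r + 1) * (r + 1) := (Nat.choose_succ_right_eq m r).symm

theorem eventually_choose_le_mul_descFactorial {k : ℕ} (hk : 0 < k) (l c r : ℕ) :
    ∀ᶠ s : ℕ in atTop,
      (k * (s + 1) + l - 1).choose r ≤ (2 * k) ^ r * (s - c).descFactorial r := by
  filter_upwards [eventually_ge_atTop (2 * (c + r) + l)] with s hs
  obtain ⟨d, rfl⟩ := Nat.exists_eq_add_of_le hs
  have hbase : k * (2 * (c + r) + l + d + 1) + l - 1 ≤
      2 * k * (2 * (c + r) + l + d - c + 1 - r) := by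
    have hsub : 2 * (c + r) + l + d - c + 1 - r = c + r + l + d + 1 := by omega
    have hl : l ≤ k * l := Nat.le_mul_of_pos_left _ hk
    rw [hsub]
    refine (Nat.sub_le _ _).trans ?_
    nlinarith [Nat.zero_le (k * d)]
  calc (k * (2 * (c + r) + l + d + 1) + l - 1).choose r
      ≤ (k * (2 * (c + r) + l + d + 1) + l - 1) ^ r := Nat.choose_le_pow _ _
    _ ≤ (2 * k * (2 * (c + r) + l + d - c + 1 - r)) ^ r := Nat.pow_le_pow_left hbase r
    _ = (2 * k) ^ r * (2 * (c + r) + l + d - c + 1 - r) ^ r := mul_pow _ _ _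
    _ ≤ (2 * k) ^ r * (2 * (c + r) + l + d - c).descFactorial r :=
        Nat.mul_le_mul_left _ (Nat.pow_sub_le_descFactorial _ _)

end Binomial

section VertexDegree

variable {k r d : ℕ} {B T U V : Finset α} {F : Finset (Finset α)} {x y : α}

theorem card_le_choose_of_forall_superset (hF : F ⊆ powersetCard r U) (hT : ∀ A ∈ F, T ⊆ A) :
    #F ≤ (#U - #T).choose (r - #T) := by
  classical
  rcases F.eq_empty_or_nonempty with rfl | ⟨A, hA⟩
  · simp
  obtain ⟨hAU, hAr⟩ := mem_powersetCard.1 (hF hA)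
  rw [← card_filter_powersetCard_subset T U r ((hT A hA).trans hAU)
    ((card_le_card (hT A hA)).trans hAr.le)]
  exact card_le_card fun A hA => mem_filter.2 ⟨hF hA, hT A hA⟩

theorem card_le_choose_of_forall_mem_pair (hF : F ⊆ powersetCard (r + 2) U) (hxy : x ≠ y)
    (hx : ∀ A ∈ F, x ∈ A) (hy : ∀ A ∈ F, y ∈ A) : #F ≤ (#U - 2).choose r := by
  classical
  simpa [card_pair hxy] using card_le_choose_of_forall_superset (T := {x, y}) hF
    fun A hA => insert_subset (hx A hA) (singleton_subset_iff.2 (hy A hA))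

variable [DecidableEq α]

/-- The number of members of the family `F` that contain the vertex `v`. -/
def vertexDegree (F : Finset (Finset α)) (v : α) : ℕ := #{A ∈ F | v ∈ A}

/-- The vertices in `V` whose degree in `F` exceeds the threshold `d`. -/
def heavyVertices (d : ℕ) (V : Finset α) (F : Finset (Finset α)) : Finset α :=
  {v ∈ V | d < vertexDegree F v}

theorem heavyVertices_subset : heavyVertices d V F ⊆ V := filter_subset _ _

theorem vertexDegree_le_of_notMem_heavyVertices (hx : x ∈ V) (hd : x ∉ heavyVertices d V F) :
    vertexDegree F x ≤ d :=
  not_lt.1 fun h => hd (mem_filter.2 ⟨hx, h⟩)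

theorem card_heavyVertices_mul_le (hF : F ⊆ powersetCard k V) :
    #(heavyVertices d V F) * (d + 1) ≤ #F * k := by
  calc #(heavyVertices d V F) * (d + 1) ≤ ∑ A ∈ F, #(heavyVertices d V F ∩ A) :=
        le_sum_card_inter fun v hv => (mem_filter.1 hv).2
    _ ≤ #F * k := by
        refine sum_le_card_nsmul _ _ _ fun A hA => ?_
        exact (card_le_card inter_subset_right).trans (mem_powersetCard.1 (hF hA)).2.le

theorem vertexDegree_le_choose (hF : F ⊆ powersetCard (r + 1) U) (x : α) :
    vertexDegree F x ≤ (#U - 1).choose r := by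
  simpa [vertexDegree] using
    card_le_choose_of_forall_superset (T := {x}) ((filter_subset (x ∈ ·) F).trans hF)
    fun A hA => singleton_subset_iff.2 (mem_filter.1 hA).2

theorem card_le_sum_vertexDegree (hB : ∀ A ∈ F, ¬Disjoint A B) :
    #F ≤ ∑ x ∈ B, vertexDegree F x := by
  refine (card_le_card fun A hA => ?_).trans
    (card_biUnion_le (s := B) (t := fun x => {A ∈ F | x ∈ A}))
  obtain ⟨x, hxA, hxB⟩ := not_disjoint_iff.1 (hB A hA)
  exact mem_biUnion.2 ⟨x, hxB, mem_filter.2 ⟨hA, hxA⟩⟩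

theorem vertexDegree_le_of_not_disjoint (hF : F ⊆ powersetCard (r + 2) U) (hx : x ∉ B)
    (hB : ∀ A ∈ F, x ∈ A → ¬Disjoint A B) : vertexDegree F x ≤ #B * (#U - 2).choose r := by
  have hstar : ∀ A ∈ F.filter (x ∈ ·), ¬Disjoint A B := fun A hA =>
    hB A (mem_filter.1 hA).1 (mem_filter.1 hA).2
  refine (card_le_sum_vertexDegree hstar).trans (sum_le_card_nsmul _ _ _ fun y hy => ?_)
  refine card_le_choose_of_forall_mem_pair (x := x) (y := y)
    ((filter_subset _ _).trans ((filter_subset _ _).trans hF)) (by rintro rfl; exact hx hy) ?_ ?_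
  · exact fun A hA => (mem_filter.1 (mem_filter.1 hA).1).2
  · exact fun A hA => (mem_filter.1 hA).2

theorem card_le_choose_add_sum_vertexDegree (hF : F ⊆ powersetCard k V) (hT : T ⊆ V) :
    #F ≤ (#V - #T).choose k + ∑ v ∈ T, vertexDegree F v := by
  have havoid : F.filter (Disjoint · T) ⊆ powersetCard k (V \ T) := fun A hA => by
    obtain ⟨hA, hAT⟩ := mem_filter.1 hA
    obtain ⟨hAV, hAk⟩ := mem_powersetCard.1 (hF hA)
    exact mem_powersetCard.2 ⟨subset_sdiff.2 ⟨hAV, hAT⟩, hAk⟩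
  have hmeet : #{A ∈ F | ¬Disjoint A T} ≤ ∑ v ∈ T, vertexDegree F v :=
    (card_le_sum_vertexDegree fun A hA => (mem_filter.1 hA).2).trans <|
      sum_le_sum fun v _ => card_le_card (filter_subset_filter _ (filter_subset _ _))
  rw [← card_filter_add_card_filter_not (Disjoint · T), ← card_sdiff_of_subset hT,
    ← card_powersetCard]
  exact Nat.add_le_add (card_le_card havoid) hmeet

theorem card_filter_not_disjoint_powersetCard (hT : T ⊆ U) (r : ℕ) :
    #{A ∈ powersetCard r U | ¬Disjoint A T} = (#U).choose r - (#U - #T).choose r := by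
  have hdisj : {A ∈ powersetCard r U | Disjoint A T} = powersetCard r (U \ T) := by
    ext A
    simp only [mem_filter, mem_powersetCard, subset_sdiff]
    tauto
  have hsplit := card_filter_add_card_filter_not (s := powersetCard r U) (Disjoint · T)
  rw [hdisj, card_powersetCard, card_powersetCard, card_sdiff_of_subset hT] at hsplit
  omega

end VertexDegree

section GridMatching

variable {e : ι × κ ↪ α} {c : κ ↪ ι} {i j : ι} {a : κ} {x : α}

/-- The permutation of positions that transposes the square subgrid with rows `c`. -/
noncomputable def transposeRows (c : κ ↪ ι) : Equiv.Perm (ι × κ) :=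
  Equiv.Perm.viaEmbedding (Equiv.prodComm κ κ) (c.prodMap (.refl κ))

theorem transposeRows_apply (c : κ ↪ ι) (a b : κ) : transposeRows c (c a, b) = (c b, a) :=
  Equiv.Perm.viaEmbedding_apply (Equiv.prodComm κ κ) (c.prodMap (.refl κ)) (a, b)

theorem transposeRows_apply_of_notMem (hi : i ∉ Set.range c) (b : κ) :
    transposeRows c (i, b) = (i, b) := by
  refine Equiv.Perm.viaEmbedding_apply_of_notMem _ _ _ ?_
  rintro ⟨⟨a, _⟩, h⟩
  exact hi ⟨a, congrArg Prod.fst h⟩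

section Transpose

variable [Fintype κ]

/-- The set of entries in row `i` of the grid `e`. -/
def gridRow (e : ι × κ ↪ α) (i : ι) : Finset α :=
  univ.map ((Function.Embedding.sectR i κ).trans e)

/-- The set of entries in column `a` of the square subgrid of `e` with rows `c`. -/
def gridColumn (e : ι × κ ↪ α) (c : κ ↪ ι) (a : κ) : Finset α :=
  univ.map ((c.trans (Function.Embedding.sectL ι a)).trans e)

theorem mem_gridRow : x ∈ gridRow e i ↔ ∃ b, e (i, b) = x := by simp [gridRow]

theorem mem_gridColumn : x ∈ gridColumn e c a ↔ ∃ b, e (c b, a) = x := by simp [gridColumn]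

theorem card_gridColumn : #(gridColumn e c a) = Fintype.card κ := by simp [gridColumn]

theorem disjoint_gridRow (hij : i ≠ j) : Disjoint (gridRow e i) (gridRow e j) := by
  simp only [disjoint_left, mem_gridRow]
  rintro _ ⟨b, rfl⟩ ⟨b', h⟩
  exact hij (congrArg Prod.fst (e.injective h)).symm

theorem gridRow_transposeRows (e : ι × κ ↪ α) (c : κ ↪ ι) (a : κ) :
    gridRow ((transposeRows c).toEmbedding.trans e) (c a) = gridColumn e c a := by
  ext x
  simp [mem_gridRow, mem_gridColumn, transposeRows_apply]

theorem gridRow_transposeRows_of_notMem (e : ι × κ ↪ α) (hi : i ∉ Set.range c) :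
    gridRow ((transposeRows c).toEmbedding.trans e) i = gridRow e i := by
  ext x
  simp [mem_gridRow, transposeRows_apply_of_notMem hi]

variable [Fintype ι] [DecidableEq α] {F : Finset (Finset α)}

theorem card_filter_gridRow_mem_lt_transposeRows (hi : gridRow e i ∉ F) (hic : i ∈ Set.range c)
    (hc : ∀ a, gridColumn e c a ∈ F) :
    #{j | gridRow e j ∈ F} < #{j | gridRow ((transposeRows c).toEmbedding.trans e) j ∈ F} := by
  have hrow : ∀ a, gridRow ((transposeRows c).toEmbedding.trans e) (c a) ∈ F := fun a => by
    rw [gridRow_transposeRows]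
    exact hc a
  refine card_lt_card ((ssubset_iff_of_subset fun j hj => ?_).2 ⟨i, ?_, by simpa using hi⟩)
  · by_cases hjc : j ∈ Set.range c
    · obtain ⟨a, rfl⟩ := hjc
      simpa using hrow a
    · simpa [gridRow_transposeRows_of_notMem e hjc] using hj
  · obtain ⟨a, rfl⟩ := hic
    simpa using hrow a

end Transpose

variable [DecidableEq α] {r : ℕ} {W : Finset α} {F : Finset (Finset α)}

/-- The injective row selection `i₀, c 0, …, c (r - 1)`. -/
def consRow (i₀ : ι) (c : Fin r ↪ {i // i ≠ i₀}) : Fin (r + 1) ↪ ι :=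
  Fin.Embedding.cons (c.trans (Function.Embedding.subtype _)) (a := i₀) (by
    rintro ⟨j, hj⟩
    exact (c j).2 hj)

variable [Fintype ι]

section

variable [DecidableEq ι]

theorem card_filter_gridColumn_eq_le (e : ι × Fin (r + 1) ↪ α) (i₀ : ι) (a : Fin (r + 1))
    {A : Finset α} (hA : #A = r + 1) :
    #{c : Fin r ↪ {i // i ≠ i₀} | gridColumn e (consRow i₀ c) a = A} ≤ (r + 1) ^ r := by
  have hpi : #(Fintype.piFinset fun _ : Fin r => A) = (r + 1) ^ r := by simp [hA]
  rw [← hpi]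
  refine card_le_card_of_injOn (fun c j => e (c j, a)) (fun c hc => ?_) fun c _ c' _ h => ?_
  · rw [mem_coe, Fintype.mem_piFinset]
    intro j
    rw [← (mem_filter.1 hc).2, mem_gridColumn]
    exact ⟨j.succ, rfl⟩
  · ext j
    exact congrArg Prod.fst (e.injective (congrFun h j))

theorem card_filter_gridColumn_notMem_le (e : ι × Fin (r + 1) ↪ α) (he : ∀ p, e p ∈ W) (i₀ : ι)
    (a : Fin (r + 1)) :
    #{c : Fin r ↪ {i // i ≠ i₀} | gridColumn e (consRow i₀ c) a ∉ F} ≤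
      (r + 1) ^ r * vertexDegree (powersetCard (r + 1) W \ F) (e (i₀, a)) := by
  set bad := ({c : Fin r ↪ {i // i ≠ i₀} | gridColumn e (consRow i₀ c) a ∉ F} : Finset _)
  have hmaps : bad.image (fun c => gridColumn e (consRow i₀ c) a) ⊆
      {A ∈ powersetCard (r + 1) W \ F | e (i₀, a) ∈ A} := by
    refine image_subset_iff.2 fun c hc => ?_
    have hsub : gridColumn e (consRow i₀ c) a ⊆ W := fun x hx => by
      obtain ⟨b, rfl⟩ := mem_gridColumn.1 hx
      exact he _
    simp only [mem_filter, mem_sdiff, mem_powersetCard]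
    exact ⟨⟨⟨hsub, by simp [card_gridColumn]⟩, (mem_filter.1 hc).2⟩, mem_gridColumn.2 ⟨0, rfl⟩⟩
  refine (card_le_mul_card_image bad _ fun A hA => ?_).trans
    (Nat.mul_le_mul_left _ (card_le_card hmaps))
  obtain ⟨c, -, rfl⟩ := mem_image.1 hA
  exact (card_le_card (filter_subset_filter _ (filter_subset _ _))).trans
    (card_filter_gridColumn_eq_le e i₀ a (by simp [card_gridColumn]))

end

theorem exists_forall_gridColumn_mem (e : ι × Fin (r + 1) ↪ α) (he : ∀ p, e p ∈ W)
    (hdeg : ∀ v ∈ W, (r + 1) ^ (r + 1) * vertexDegree (powersetCard (r + 1) W \ F) v <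
      (Fintype.card ι - 1).descFactorial r) (i₀ : ι) :
    ∃ c : Fin r ↪ {i // i ≠ i₀}, ∀ a, gridColumn e (consRow i₀ c) a ∈ F := by
  classical
  by_contra! hbad
  have hcard : Fintype.card (Fin r ↪ {i // i ≠ i₀}) = (Fintype.card ι - 1).descFactorial r := by
    simp [Fintype.card_embedding_eq, Fintype.card_subtype_compl]
  have hcover : Fintype.card (Fin r ↪ {i // i ≠ i₀}) ≤
      ∑ a, #{c : Fin r ↪ {i // i ≠ i₀} | gridColumn e (consRow i₀ c) a ∉ F} := by
    refine (card_le_card fun c _ => ?_).trans card_biUnion_le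
    obtain ⟨a, ha⟩ := hbad c
    exact mem_biUnion.2 ⟨a, mem_univ a, mem_filter.2 ⟨mem_univ c, ha⟩⟩
  have hcolumn : ∀ a ∈ (univ : Finset (Fin (r + 1))),
      (r + 1) * #{c : Fin r ↪ {i // i ≠ i₀} | gridColumn e (consRow i₀ c) a ∉ F} <
        (Fintype.card ι - 1).descFactorial r := fun a _ => by
    refine lt_of_le_of_lt ?_ (hdeg _ (he (i₀, a)))
    rw [pow_succ', mul_assoc]
    exact Nat.mul_le_mul_left _ (card_filter_gridColumn_notMem_le e he i₀ a)
  have hlt := sum_lt_sum_of_nonempty univ_nonempty hcolumn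
  rw [← mul_sum, sum_const, smul_eq_mul, card_fin, ← hcard] at hlt
  exact absurd (Nat.lt_of_mul_lt_mul_left hlt) (not_lt.2 hcover)

theorem exists_perm_forall_gridRow_mem (e : ι × Fin (r + 1) ↪ α) (he : ∀ p, e p ∈ W)
    (hdeg : ∀ v ∈ W, (r + 1) ^ (r + 1) * vertexDegree (powersetCard (r + 1) W \ F) v <
      (Fintype.card ι - 1).descFactorial r) :
    ∃ σ : Equiv.Perm (ι × Fin (r + 1)), ∀ i, gridRow (σ.toEmbedding.trans e) i ∈ F := by
  classical
  obtain ⟨σ, -, hσ⟩ := exists_max_image (univ : Finset (Equiv.Perm (ι × Fin (r + 1))))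
    (fun σ => #{i | gridRow (σ.toEmbedding.trans e) i ∈ F}) univ_nonempty
  refine ⟨σ, fun i₀ => by_contra fun hi₀ => ?_⟩
  obtain ⟨c, hc⟩ := exists_forall_gridColumn_mem (σ.toEmbedding.trans e) (fun p => he (σ p)) hdeg i₀
  exact absurd (hσ ((transposeRows (consRow i₀ c)).trans σ) (mem_univ _)) <| not_le.2 <|
    card_filter_gridRow_mem_lt_transposeRows hi₀ ⟨0, rfl⟩ hc

end GridMatching

section Matching

variable [DecidableEq α] {k r m l s c : ℕ} {A B T V W : Finset α} {F M N : Finset (Finset α)}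

/-- `M` is a matching in `F`: a subfamily of pairwise disjoint members. -/
structure IsMatching (F M : Finset (Finset α)) : Prop where
  subset : M ⊆ F
  pairwiseDisjoint : (M : Set (Finset α)).PairwiseDisjoint id

theorem exists_isMatching_card_eq_of_vertexDegree_compl_lt (hW : #W = m * (r + 1))
    (hdeg : ∀ v ∈ W, (r + 1) ^ (r + 1) * vertexDegree (powersetCard (r + 1) W \ F) v <
      (m - 1).descFactorial r) :
    ∃ M, IsMatching F M ∧ #M = m ∧ ∀ A ∈ M, A ⊆ W := by
  have φ : Fin m × Fin (r + 1) ≃ W := Fintype.equivOfCardEq (by simp [hW])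
  obtain ⟨σ, hσ⟩ := exists_perm_forall_gridRow_mem (F := F)
    (φ.toEmbedding.trans (Function.Embedding.subtype _)) (fun p => (φ p).2)
    (by simpa only [Fintype.card_fin] using hdeg)
  set e := σ.toEmbedding.trans (φ.toEmbedding.trans (Function.Embedding.subtype _))
  have hinj : Function.Injective (gridRow e) := fun i j hij => by_contra fun hne => by
    have hi : e (i, 0) ∈ gridRow e i := mem_gridRow.2 ⟨0, rfl⟩
    exact disjoint_left.1 (disjoint_gridRow hne) hi (hij ▸ hi)
  refine ⟨univ.map ⟨gridRow e, hinj⟩, ⟨?_, ?_⟩, by simp, ?_⟩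
  · simpa [subset_iff] using hσ
  · simp only [coe_map, Function.Embedding.coeFn_mk, coe_univ, Set.image_univ]
    rintro _ ⟨i, rfl⟩ _ ⟨j, rfl⟩ hij
    exact disjoint_gridRow (ne_of_apply_ne _ hij)
  · simp only [mem_map, mem_univ, true_and, forall_exists_index]
    rintro _ i rfl x hx
    obtain ⟨b, rfl⟩ := mem_gridRow.1 hx
    exact (φ (σ (i, b))).2

namespace IsMatching

theorem biUnion_subset (hM : IsMatching F M) (hF : F ⊆ powersetCard k V) :
    M.biUnion id ⊆ V :=
  Finset.biUnion_subset.2 fun _ hA => (mem_powersetCard.1 (hF (hM.subset hA))).1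

theorem card_biUnion (hM : IsMatching F M) (hF : F ⊆ powersetCard k V) :
    #(M.biUnion id) = #M * k :=
  (Finset.card_biUnion hM.pairwiseDisjoint).trans <|
    sum_const_nat fun _ hA => (mem_powersetCard.1 (hF (hM.subset hA))).2

theorem insert (hM : IsMatching F M) (hA : A ∈ F) (hAM : Disjoint A (M.biUnion id)) :
    IsMatching F (insert A M) where
  subset := insert_subset hA hM.subset
  pairwiseDisjoint := by
    rw [coe_insert]
    exact hM.pairwiseDisjoint.insert fun A' hA' _ => (disjoint_biUnion_right _ _ _).1 hAM A' hA'

theorem union (hM : IsMatching F M) (hN : IsMatching F N)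
    (hMN : Disjoint (M.biUnion id) (N.biUnion id)) : IsMatching F (M ∪ N) where
  subset := union_subset hM.subset hN.subset
  pairwiseDisjoint := by
    rw [coe_union]
    refine hM.pairwiseDisjoint.union hN.pairwiseDisjoint fun A hA A' hA' _ => ?_
    exact disjoint_of_subset_left (subset_biUnion_of_mem id hA)
      (disjoint_of_subset_right (subset_biUnion_of_mem id hA') hMN)

theorem exists_superset_cover (hM : IsMatching F M) (hF : F ⊆ powersetCard (r + 2) V) {K : ℕ}
    (hK : (#M + #T) * (r + 2) ≤ K) (hT : T ⊆ heavyVertices (K * (#V - 2).choose r) V F) :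
    ∃ N, IsMatching F N ∧ M ⊆ N ∧ #N ≤ #M + #T ∧ T ⊆ N.biUnion id := by
  induction T using Finset.induction_on with
  | empty => exact ⟨M, hM, Subset.rfl, le_rfl, empty_subset _⟩
  | insert v T hv ih =>
    rw [card_insert_of_notMem hv] at hK ⊢
    obtain ⟨N, hN, hMN, hNcard, hTN⟩ := ih (le_trans (by gcongr; omega) hK)
      ((subset_insert v T).trans hT)
    by_cases hvN : v ∈ N.biUnion id
    · exact ⟨N, hN, hMN, by omega, insert_subset hvN hTN⟩
    obtain ⟨A, hA, hvA, hAN⟩ : ∃ A ∈ F, v ∈ A ∧ Disjoint A (N.biUnion id) := by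
      by_contra! hmeet
      have hlow := vertexDegree_le_of_not_disjoint hF hvN hmeet
      have hhigh := (mem_filter.1 (hT (mem_insert_self v T))).2
      rw [hN.card_biUnion hF] at hlow
      have hNK : #N * (r + 2) ≤ K := le_trans (by gcongr; omega) hK
      exact absurd (hlow.trans (Nat.mul_le_mul_right _ hNK)) (not_le.2 hhigh)
    refine ⟨_, hN.insert hA hAN, hMN.trans (subset_insert _ _), ?_, ?_⟩
    · exact (card_insert_le _ _).trans (by omega)
    · rw [biUnion_insert]
      exact insert_subset (mem_union_left _ hvA) (hTN.trans subset_union_right)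

theorem exists_card_eq (hM : IsMatching F M) (hF : F ⊆ powersetCard (r + 1) V)
    (hV : #V = (s + 1) * (r + 1) + l) (hB : B ⊆ V)
    (hdeg : ∀ v ∈ V, v ∉ B → (r + 1) ^ (r + 1) * vertexDegree (powersetCard (r + 1) V \ F) v <
      (s - #M).descFactorial r)
    (hMs : #M ≤ s) (hcover : #(B \ M.biUnion id) ≤ l) :
    ∃ N, IsMatching F N ∧ #N = s + 1 := by
  set X := M.biUnion id
  have hVX : #(V \ X) = (s + 1 - #M) * (r + 1) + l := by
    rw [card_sdiff_of_subset (hM.biUnion_subset hF), hM.card_biUnion hF, hV, Nat.sub_mul]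
    have : #M * (r + 1) ≤ (s + 1) * (r + 1) := by gcongr; omega
    omega
  obtain ⟨R, hBR, hRV, hRl⟩ := exists_subsuperset_card_eq (sdiff_subset_sdiff hB Subset.rfl) hcover
    (by omega : l ≤ #(V \ X))
  have hW : #((V \ X) \ R) = (s + 1 - #M) * (r + 1) := by
    rw [card_sdiff_of_subset hRV, hVX, hRl, Nat.add_sub_cancel]
  obtain ⟨N, hN, hNcard, hNW⟩ := exists_isMatching_card_eq_of_vertexDegree_compl_lt (F := F) hW
    fun v hv => by
      obtain ⟨⟨hvV, hvX⟩, hvR⟩ : (v ∈ V ∧ v ∉ X) ∧ v ∉ R := by simpa only [mem_sdiff] using hv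
      have hmono : vertexDegree (powersetCard (r + 1) ((V \ X) \ R) \ F) v ≤
          vertexDegree (powersetCard (r + 1) V \ F) v :=
        card_le_card <| filter_subset_filter _ <| sdiff_subset_sdiff
          (powersetCard_mono (sdiff_subset.trans sdiff_subset)) Subset.rfl
      rw [show s + 1 - #M - 1 = s - #M by omega]
      exact (Nat.mul_le_mul_left _ hmono).trans_lt
        (hdeg v hvV fun hvB => hvR (hBR (mem_sdiff.2 ⟨hvB, hvX⟩)))
  have hXN : Disjoint X (N.biUnion id) := (disjoint_biUnion_right _ _ _).2 fun A hA =>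
    disjoint_of_subset_right ((hNW A hA).trans sdiff_subset) disjoint_sdiff
  have hMN : Disjoint M N := disjoint_left.2 fun A hAM hAN => by
    have hA : Disjoint A A := disjoint_of_subset_left (subset_biUnion_of_mem id hAM)
      (disjoint_of_subset_right (subset_biUnion_of_mem id hAN) hXN)
    simpa [(disjoint_self_iff_empty _).1 hA] using (mem_powersetCard.1 (hF (hM.subset hAM))).2
  exact ⟨M ∪ N, hM.union hN hXN, by rw [card_union_of_disjoint hMN, hNcard]; omega⟩

theorem exists_card_eq_of_card_sdiff_heavyVertices_le (hM : IsMatching F M)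
    (hF : F ⊆ powersetCard (r + 2) V) (hV : #V = (s + 1) * (r + 2) + l) (hB : B ⊆ V)
    (hdeg : ∀ v ∈ V, v ∉ B → (r + 2) ^ (r + 2) * vertexDegree (powersetCard (r + 2) V \ F) v <
      (s - c).descFactorial (r + 1))
    (hMc : #M + #B ≤ c) (hcs : c ≤ s)
    (hcover : #((B \ heavyVertices (c * (r + 2) * (#V - 2).choose r) V F) \ M.biUnion id) ≤ l) :
    ∃ N, IsMatching F N ∧ #N = s + 1 := by
  set H := heavyVertices (c * (r + 2) * (#V - 2).choose r) V F
  have hBH : #(B ∩ H) ≤ #B := card_le_card inter_subset_left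
  obtain ⟨N, hN, hMN, hNcard, hHN⟩ := hM.exists_superset_cover hF (T := B ∩ H) (K := c * (r + 2))
    (by gcongr; omega) inter_subset_right
  refine hN.exists_card_eq hF hV hB (fun v hvV hvB => (hdeg v hvV hvB).trans_le ?_) (by omega)
    ((card_le_card fun v hv => ?_).trans hcover)
  · exact Nat.descFactorial_le _ (by omega)
  · obtain ⟨hvB, hvN⟩ := mem_sdiff.1 hv
    refine mem_sdiff.2 ⟨mem_sdiff.2 ⟨hvB, fun hvH => hvN (hHN (mem_inter.2 ⟨hvB, hvH⟩))⟩, ?_⟩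
    exact fun hvM => hvN (biUnion_subset_biUnion_of_subset_left _ hMN hvM)

end IsMatching

end Matching

section ExceptionalSet

variable [DecidableEq α] {r q t m d : ℕ} {S V : Finset α} {F : Finset (Finset α)} {v : α}

/-- The vertices of `V` for which more than a `1 / q` fraction of the `(#V - 1).choose r` sets of
size `r + 1` through them are missing from `F`. -/
def deficientVertices (q r : ℕ) (V : Finset α) (F : Finset (Finset α)) : Finset α :=
  heavyVertices ((#V - 1).choose r / q) V (powersetCard (r + 1) V \ F)

theorem card_deficientVertices_le (hq : 0 < q) (hF : F ⊆ powersetCard (r + 1) V)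
    (hV : #V = m + t) (hcard : m.choose (r + 1) ≤ #F) :
    #(deficientVertices q r V F) ≤ q * (r + 1) * t := by
  have hmissing : #(powersetCard (r + 1) V \ F) ≤ t * (#V - 1).choose r := by
    have := choose_add_succ_le m t r
    rw [card_sdiff_of_subset hF, card_powersetCard, hV]
    omega
  refine Nat.le_of_mul_le_mul_right (c := (#V - 1).choose r / q + 1) ?_ (Nat.succ_pos _)
  calc #(deficientVertices q r V F) * ((#V - 1).choose r / q + 1)
      ≤ #(powersetCard (r + 1) V \ F) * (r + 1) := card_heavyVertices_mul_le sdiff_subset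
    _ ≤ t * (q * ((#V - 1).choose r / q + 1)) * (r + 1) := by
        gcongr
        exact hmissing.trans (Nat.mul_le_mul_left _ (Nat.lt_mul_div_succ _ hq).le)
    _ = q * (r + 1) * t * ((#V - 1).choose r / q + 1) := by ring

theorem mul_vertexDegree_lt_of_notMem_deficientVertices {a Q X : ℕ} (hQ : 0 < Q) (hX : 0 < X)
    (hbound : (#V - 1).choose r ≤ Q * X) (hvV : v ∈ V)
    (hv : v ∉ deficientVertices (2 * a * Q) r V F) :
    a * vertexDegree (powersetCard (r + 1) V \ F) v < X := by
  set g := vertexDegree (powersetCard (r + 1) V \ F) v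
  have hg : 2 * a * Q * g ≤ (#V - 1).choose r :=
    (Nat.mul_le_mul_left _ (vertexDegree_le_of_notMem_heavyVertices hvV hv)).trans
      (Nat.mul_div_le _ _)
  have : 2 * (a * g) ≤ X := by
    refine Nat.le_of_mul_le_mul_left (le_trans (le_of_eq ?_) (hg.trans hbound)) hQ
    ring
  omega

theorem card_le_of_forall_vertexDegree_le (hF : F ⊆ powersetCard (r + 1) V) (hS : S ⊆ V)
    (hV : #V = m + 1 + t) (hcard : (m + 1).choose (r + 1) ≤ #F)
    (hdeg : ∀ v ∈ S, vertexDegree F v ≤ d) (hd : (t + 1) * d < m.choose r) : #S ≤ t := by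
  by_contra! ht
  obtain ⟨T, hTS, hT⟩ := exists_subset_card_eq (Nat.succ_le_of_lt ht)
  have hsplit := card_le_choose_add_sum_vertexDegree hF (hTS.trans hS)
  have hsum : ∑ v ∈ T, vertexDegree F v ≤ (t + 1) * d :=
    (sum_le_card_nsmul _ _ _ fun v hv => hdeg v (hTS hv)).trans (by rw [hT, smul_eq_mul])
  rw [hV, hT, show m + 1 + t - (t + 1) = m by omega] at hsplit
  rw [Nat.choose_succ_succ'] at hcard
  omega

theorem card_eq_and_forall_isMatching_card_inter_le_one {l c : ℕ} (hc : 1 ≤ c) (hle : #S ≤ l + 2)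
    (hS : ∀ v ∈ S, ∃ A ∈ F, v ∈ A)
    (hlt : ∀ M, IsMatching F M → #M ≤ c → l < #(S \ M.biUnion id)) :
    #S = l + 2 ∧ ∀ M, IsMatching F M → #M ≤ c → #(S ∩ M.biUnion id) ≤ 1 := by
  have hpos : 0 < #S := by
    simpa using (Nat.zero_le l).trans_lt (hlt ∅ ⟨empty_subset _, by simp⟩ (by simp))
  obtain ⟨v, hv⟩ := card_pos.1 hpos
  obtain ⟨A, hA, hvA⟩ := hS v hv
  have hlA : l < #(S \ A) := by
    simpa using hlt {A} ⟨singleton_subset_iff.2 hA, by simp⟩ (by simpa using hc)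
  have hSA : #(S \ A) < #S := card_lt_card <|
    (ssubset_iff_of_subset sdiff_subset).2 ⟨v, hv, fun h => (mem_sdiff.1 h).2 hvA⟩
  refine ⟨by omega, fun M hM hMc => ?_⟩
  have := hlt M hM hMc
  have := card_sdiff_add_card_inter S (M.biUnion id)
  omega

theorem eventually_exists_card_inter_biUnion_isMatching_le_one (α : Type*) [DecidableEq α]
    (r l : ℕ) {c : ℕ} (hc : 1 ≤ c) :
    ∀ᶠ s : ℕ in atTop, ∀ (m : ℕ) (V : Finset α) (F : Finset (Finset α)),
      (r + 2) * (s + 1) = m + 2 → #V = m + (l + 2) → F ⊆ powersetCard (r + 2) V →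
      (∀ v ∈ V, ∃ A ∈ F, v ∈ A) → (∀ M, IsMatching F M → #M ≤ s) → m.choose (r + 2) ≤ #F →
      ∃ S ⊆ V, #S = l + 2 ∧ ∀ M, IsMatching F M → #M ≤ c → #(S ∩ M.biUnion id) ≤ 1 := by
  set Q := (2 * (r + 2)) ^ (r + 1)
  set q := 2 * (r + 2) ^ (r + 2) * Q
  set b := c + q * (r + 2) * (l + 2)
  obtain ⟨m₀, hm₀⟩ := eventually_atTop.1
    (eventually_mul_choose_lt_choose_succ ((l + 3) * (b * (r + 2))) (l + 1) r)
  filter_upwards [eventually_choose_le_mul_descFactorial (Nat.succ_pos (r + 1)) l b (r + 1),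
    eventually_ge_atTop (m₀ + b + r + 2)] with s hchoose hs m V F hm hV hF hcover hν hcard
  set B := deficientVertices q (r + 1) V F
  set S := B \ heavyVertices (b * (r + 2) * (#V - 2).choose r) V F
  have hBV : B ⊆ V := heavyVertices_subset
  have hSV : S ⊆ V := sdiff_subset.trans hBV
  have hB : #B ≤ q * (r + 2) * (l + 2) := card_deficientVertices_le (by positivity) hF hV hcard
  have hdeg : ∀ v ∈ V, v ∉ B → (r + 2) ^ (r + 2) *
      vertexDegree (powersetCard (r + 2) V \ F) v < (s - b).descFactorial (r + 1) :=
    fun v hvV hvB => mul_vertexDegree_lt_of_notMem_deficientVertices (by positivity)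
      (Nat.descFactorial_pos.2 (by omega)) (by rwa [hV, ← add_assoc, add_right_comm, ← hm]) hvV hvB
  have hsm : s + 1 + (s + 1) ≤ m + 2 := hm ▸ by nlinarith [Nat.zero_le (r * (s + 1))]
  have hSle : #S ≤ l + 2 := by
    obtain ⟨m, rfl⟩ := Nat.exists_eq_add_of_le' (show 1 ≤ m by omega)
    refine card_le_of_forall_vertexDegree_le hF hSV hV hcard (fun v hv => ?_) ?_
      (d := b * (r + 2) * (#V - 2).choose r)
    · exact vertexDegree_le_of_notMem_heavyVertices (hSV hv) (mem_sdiff.1 hv).2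
    · rw [hV, show m + 1 + (l + 2) - 2 = m + (l + 1) by omega, ← mul_assoc]
      exact hm₀ m (by omega)
  refine ⟨S, hSV, card_eq_and_forall_isMatching_card_inter_le_one hc hSle
    (fun v hv => hcover v (hSV hv)) fun M hM hMc => not_le.1 fun hle => ?_⟩
  obtain ⟨N, hN, hNs⟩ := hM.exists_card_eq_of_card_sdiff_heavyVertices_le hF
    (by rw [hV, mul_comm]; omega) hBV hdeg (show #M + #B ≤ b by omega) (by omega) hle
  have := hν N hN
  omega

end ExceptionalSet

section CrossIntersecting

variable {r m t : ℕ} {U B : Finset α} {S : Finset ι}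
  {𝒜 : ι → Finset (Finset α)} {v w : ι}

/-- Nonempty families `𝒜 v`, `v ∈ S`, of `r`-subsets of `U` such that members of different
families always intersect. -/
structure IsCrossIntersecting (r : ℕ) (U : Finset α) (S : Finset ι)
    (𝒜 : ι → Finset (Finset α)) : Prop where
  subset : ∀ v ∈ S, 𝒜 v ⊆ powersetCard r U
  nonempty : ∀ v ∈ S, (𝒜 v).Nonempty
  not_disjoint : ∀ v ∈ S, ∀ w ∈ S, v ≠ w → ∀ A ∈ 𝒜 v, ∀ B ∈ 𝒜 w, ¬Disjoint A B

/-- The total size of `t` cross-intersecting families of `r`-subsets of an `m`-set, one of which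
consists of all sets meeting a fixed `r`-set while the others contain only that `r`-set. -/
def oneLargeTotal (m r t : ℕ) : ℕ := m.choose r - (m - r).choose r + (t - 1)

/-- The total size of `t` copies of the star of all `r`-subsets of an `m`-set through a point. -/
def starsTotal (m r t : ℕ) : ℕ := t * (m - 1).choose (r - 1)

theorem mul_choose_le_choose_sub_choose (hm : r + 2 ≤ m) :
    (r + 2) * (m - 1).choose (r + 1) ≤
      m.choose (r + 2) - (m - (r + 2)).choose (r + 2) +
        (r + 2) * ((r + 1) * (m - 2).choose r) := by
  obtain ⟨a, rfl⟩ := Nat.exists_eq_add_of_le' hm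
  have hlower : a.choose (r + 2) + (r + 2) * a.choose (r + 1) ≤ (a + (r + 2)).choose (r + 2) :=
    le_choose_add_succ a (r + 2) (r + 1)
  have hupper := Nat.mul_le_mul_left (r + 2) (choose_add_succ_le a (r + 1) r)
  rw [show a + (r + 1) - 1 = a + r by omega, mul_add] at hupper
  rw [Nat.add_sub_cancel, show a + (r + 2) - 1 = a + (r + 1) by omega,
    show a + (r + 2) - 2 = a + r by omega]
  omega

theorem oneLargeTotal_le_starsTotal (hm : r + 2 ≤ m) (ht : r + 2 ≤ t) :
    oneLargeTotal m (r + 2) t ≤ starsTotal m (r + 2) t := by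
  obtain ⟨a, rfl⟩ := Nat.exists_eq_add_of_le' hm
  obtain ⟨u, rfl⟩ := Nat.exists_eq_add_of_le' ht
  have hpascal : (a + (r + 2)).choose (r + 2) =
      (a + (r + 1)).choose (r + 1) + (a + (r + 1)).choose (r + 2) := Nat.choose_succ_succ' _ _
  have hpascal' : (a + (r + 1)).choose (r + 1) = (a + r).choose r + (a + r).choose (r + 1) :=
    Nat.choose_succ_succ' _ _
  have hupper : (a + (r + 1)).choose (r + 2) ≤
      a.choose (r + 2) + (r + 1) * (a + r).choose (r + 1) := choose_add_succ_le a (r + 1) (r + 1)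
  have hpos : 0 < (a + r).choose r := Nat.choose_pos (by omega)
  have hu : u ≤ u * ((a + r).choose r + (a + r).choose (r + 1)) :=
    Nat.le_mul_of_pos_right _ (by omega)
  have hr : r + 1 ≤ (r + 1) * (a + r).choose r := Nat.le_mul_of_pos_right _ hpos
  have hdiff : (a + (r + 2)).choose (r + 2) - a.choose (r + 2) ≤
      (a + (r + 1)).choose (r + 1) + (r + 1) * (a + r).choose (r + 1) := by omega
  rw [oneLargeTotal, starsTotal, Nat.add_sub_cancel, show u + (r + 2) - 1 = u + (r + 1) by omega,
    show a + (r + 2) - 1 = a + (r + 1) by omega, show r + 2 - 1 = r + 1 by omega]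
  rw [hpascal'] at hdiff ⊢
  linarith

theorem starsTotal_le_oneLargeTotal (hm : r + 2 ≤ m) (ht : t < r + 2)
    (hlarge : (r + 2) * (r + 1) * (m - 2).choose r ≤ (m - 1).choose (r + 1)) :
    starsTotal m (r + 2) t ≤ oneLargeTotal m (r + 2) t := by
  have hmul := mul_choose_le_choose_sub_choose hm
  have hstars : starsTotal m (r + 2) t ≤ (r + 1) * (m - 1).choose (r + 1) :=
    Nat.mul_le_mul_right _ (by omega)
  rw [oneLargeTotal]
  linarith

section CoreVertices

variable [DecidableEq α]

/-- The vertices of `U` of degree more than `(r + 2) * (#U - 2).choose r` in `F`. For a family of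
`(r + 2)`-sets these lie in every `(r + 2)`-set that meets all members of `F`. -/
def coreVertices (r : ℕ) (U : Finset α) (F : Finset (Finset α)) : Finset α :=
  heavyVertices ((r + 2) * (#U - 2).choose r) U F

namespace IsCrossIntersecting

theorem coreVertices_subset (h : IsCrossIntersecting (r + 2) U S 𝒜) (hv : v ∈ S) (hw : w ∈ S)
    (hvw : v ≠ w) (hB : B ∈ 𝒜 w) : coreVertices r U (𝒜 v) ⊆ B := fun x hx => by
  by_contra hxB
  have hlow := vertexDegree_le_of_not_disjoint (h.subset v hv) hxB fun A hA _ =>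
    h.not_disjoint v hv w hw hvw A hA B hB
  rw [(mem_powersetCard.1 (h.subset w hw hB)).2] at hlow
  exact absurd (mem_filter.1 hx).2 (not_lt.2 hlow)

theorem card_le_card_coreVertices_mul_add (h : IsCrossIntersecting (r + 2) U S 𝒜) (hv : v ∈ S)
    (hw : w ∈ S) (hvw : v ≠ w) :
    #(𝒜 v) ≤ #(coreVertices r U (𝒜 v)) * (#U - 1).choose (r + 1) +
      (r + 2) * ((r + 2) * (#U - 2).choose r) := by
  set H := coreVertices r U (𝒜 v)
  obtain ⟨B, hB⟩ := h.nonempty w hw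
  obtain ⟨hBU, hBcard⟩ := mem_powersetCard.1 (h.subset w hw hB)
  have hHB : H ⊆ B := h.coreVertices_subset hv hw hvw hB
  calc #(𝒜 v) ≤ ∑ x ∈ B, vertexDegree (𝒜 v) x :=
        card_le_sum_vertexDegree fun A hA => h.not_disjoint v hv w hw hvw A hA B hB
    _ = ∑ x ∈ H, vertexDegree (𝒜 v) x + ∑ x ∈ B \ H, vertexDegree (𝒜 v) x := by
        rw [add_comm, sum_sdiff hHB]
    _ ≤ #H * (#U - 1).choose (r + 1) + #(B \ H) * ((r + 2) * (#U - 2).choose r) := by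
        refine Nat.add_le_add (sum_le_card_nsmul _ _ _ fun x _ => ?_)
          (sum_le_card_nsmul _ _ _ fun x hx => ?_)
        · exact vertexDegree_le_choose (h.subset v hv) x
        · obtain ⟨hxB, hxH⟩ := mem_sdiff.1 hx
          exact vertexDegree_le_of_notMem_heavyVertices (hBU hxB) hxH
    _ ≤ _ := by
        gcongr
        exact hBcard ▸ card_le_card sdiff_subset

theorem sum_card_le_oneLargeTotal (h : IsCrossIntersecting (r + 2) U S 𝒜) (hv : v ∈ S)
    (hS : 2 ≤ #S) (hH : r + 2 ≤ #(coreVertices r U (𝒜 v))) :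
    ∑ w ∈ S, #(𝒜 w) ≤ oneLargeTotal #U (r + 2) #S := by
  classical
  set H := coreVertices r U (𝒜 v)
  have heq : ∀ w ∈ S, v ≠ w → ∀ B ∈ 𝒜 w, B = H := fun w hw hvw B hB =>
    (eq_of_subset_of_card_le (h.coreVertices_subset hv hw hvw hB)
      ((mem_powersetCard.1 (h.subset w hw hB)).2.trans_le hH)).symm
  obtain ⟨w, hw, hwv⟩ := exists_mem_ne hS v
  obtain ⟨B, hB⟩ := h.nonempty w hw
  obtain ⟨hBU, hBcard⟩ := mem_powersetCard.1 (h.subset w hw hB)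
  have hlarge : #(𝒜 v) ≤ (#U).choose (r + 2) - (#U - (r + 2)).choose (r + 2) := by
    rw [← hBcard, ← card_filter_not_disjoint_powersetCard hBU, hBcard]
    exact card_le_card fun A hA =>
      mem_filter.2 ⟨h.subset v hv hA, h.not_disjoint v hv w hw hwv.symm A hA B hB⟩
  have hsmall : ∑ w ∈ S.erase v, #(𝒜 w) ≤ #S - 1 := by
    rw [← card_erase_of_mem hv, card_eq_sum_ones]
    refine sum_le_sum fun w hw => card_le_one.2 fun A hA A' hA' => ?_
    obtain ⟨hwv, hw⟩ := mem_erase.1 hw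
    rw [heq w hw hwv.symm A hA, heq w hw hwv.symm A' hA']
  rw [← add_sum_erase S _ hv]
  exact Nat.add_le_add hlarge hsmall

theorem sum_card_le_of_two_le_card_coreVertices (h : IsCrossIntersecting (r + 2) U S 𝒜)
    (hv : v ∈ S) (hS : 2 ≤ #S) (hH : 2 ≤ #(coreVertices r U (𝒜 v)))
    (hH' : #(coreVertices r U (𝒜 v)) ≤ r + 1) :
    ∑ w ∈ S, #(𝒜 w) ≤
      (r + 1) * (#U - 1).choose (r + 1) + ((r + 2) * (r + 2) + #S) * (#U - 2).choose r := by
  classical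
  obtain ⟨x, hx, y, hy, hxy⟩ := one_lt_card.1 hH
  obtain ⟨w, hw, hwv⟩ := exists_mem_ne hS v
  have hlarge := h.card_le_card_coreVertices_mul_add hv hw hwv.symm
  have hsmall : ∑ w ∈ S.erase v, #(𝒜 w) ≤ #S * (#U - 2).choose r := by
    refine (sum_le_card_nsmul _ _ ((#U - 2).choose r) fun w hw => ?_).trans
      (Nat.mul_le_mul_right _ card_erase_le)
    obtain ⟨hwv, hw⟩ := mem_erase.1 hw
    have hsub := fun B (hB : B ∈ 𝒜 w) => h.coreVertices_subset hv hw hwv.symm hB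
    exact card_le_choose_of_forall_mem_pair (h.subset w hw) hxy (fun B hB => hsub B hB hx)
      fun B hB => hsub B hB hy
  rw [← add_sum_erase S _ hv]
  linarith [Nat.mul_le_mul_right ((#U - 1).choose (r + 1)) hH']

theorem sum_card_le_starsTotal (h : IsCrossIntersecting (r + 2) U S 𝒜) (hS : 2 ≤ #S)
    (hH : ∀ v ∈ S, (coreVertices r U (𝒜 v)).Nonempty) :
    ∑ v ∈ S, #(𝒜 v) ≤ starsTotal #U (r + 2) #S := by
  refine sum_le_card_nsmul _ _ _ fun v hv => ?_
  obtain ⟨w, hw, hwv⟩ := exists_mem_ne hS v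
  obtain ⟨x, hx⟩ := hH w hw
  simpa using card_le_choose_of_forall_superset (T := {x}) (h.subset v hv) fun A hA =>
    singleton_subset_iff.2 (h.coreVertices_subset hw hv hwv hA hx)

theorem sum_card_le_of_coreVertices_eq_empty (h : IsCrossIntersecting (r + 2) U S 𝒜)
    (hv : v ∈ S) (hS : 2 ≤ #S) (hHv : coreVertices r U (𝒜 v) = ∅)
    (hH : ∀ w ∈ S, #(coreVertices r U (𝒜 w)) ≤ 1) :
    ∑ w ∈ S, #(𝒜 w) ≤ (#S - 1) * (#U - 1).choose (r + 1) +
      #S * ((r + 2) * ((r + 2) * (#U - 2).choose r)) := by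
  classical
  have hbound : ∀ w ∈ S, #(𝒜 w) ≤
      #(coreVertices r U (𝒜 w)) * (#U - 1).choose (r + 1) +
        (r + 2) * ((r + 2) * (#U - 2).choose r) := fun w hw => by
    obtain ⟨u, hu, huw⟩ := exists_mem_ne hS w
    exact h.card_le_card_coreVertices_mul_add hw hu huw.symm
  have hcount : ∑ w ∈ S, #(coreVertices r U (𝒜 w)) ≤ #S - 1 := by
    rw [← add_sum_erase S _ hv, hHv, card_empty, zero_add, ← card_erase_of_mem hv]
    simpa using sum_le_card_nsmul _ _ 1 fun w hw => hH w (mem_of_mem_erase hw)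
  refine (sum_le_sum hbound).trans ?_
  rw [sum_add_distrib, ← sum_mul, sum_const, smul_eq_mul]
  gcongr

end IsCrossIntersecting

end CoreVertices

theorem IsCrossIntersecting.sum_card_le_max (h : IsCrossIntersecting (r + 2) U S 𝒜) (hS : 2 ≤ #S)
    (hlarge : ((#S + 2) * ((r + 2) * (r + 2)) + #S) * (#U - 2).choose r ≤
      (#U - 1).choose (r + 1)) :
    ∑ v ∈ S, #(𝒜 v) ≤ max (oneLargeTotal #U (r + 2) #S) (starsTotal #U (r + 2) #S) := by
  classical
  by_cases htwo : ∃ v ∈ S, 2 ≤ #(coreVertices r U (𝒜 v))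
  · obtain ⟨v, hv, hH⟩ := htwo
    refine le_max_of_le_left ?_
    rcases le_or_gt (r + 2) #(coreVertices r U (𝒜 v)) with hfull | hlt
    · exact h.sum_card_le_oneLargeTotal hv hS hfull
    refine (h.sum_card_le_of_two_le_card_coreVertices hv hS hH (by omega)).trans ?_
    obtain ⟨A, hA⟩ := h.nonempty v hv
    obtain ⟨hAU, hAcard⟩ := mem_powersetCard.1 (h.subset v hv hA)
    have hmul := mul_choose_le_choose_sub_choose (hAcard ▸ card_le_card hAU)
    have hlow : ((r + 2) * (r + 2) + #S + (r + 2) * (r + 1)) * (#U - 2).choose r ≤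
        (#U - 1).choose (r + 1) := le_trans (Nat.mul_le_mul_right _ (by nlinarith)) hlarge
    rw [oneLargeTotal]
    linarith
  · push Not at htwo
    refine le_max_of_le_right ?_
    by_cases hne : ∀ v ∈ S, (coreVertices r U (𝒜 v)).Nonempty
    · exact h.sum_card_le_starsTotal hS hne
    simp only [not_forall, not_nonempty_iff_eq_empty] at hne
    obtain ⟨v, hv, hHv⟩ := hne
    refine (h.sum_card_le_of_coreVertices_eq_empty hv hS hHv fun w hw =>
      Nat.le_of_lt_succ (htwo w hw)).trans ?_
    have hlow : #S * ((r + 2) * ((r + 2) * (#U - 2).choose r)) ≤ (#U - 1).choose (r + 1) :=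
      le_trans (by nlinarith [Nat.zero_le ((#U - 2).choose r)]) hlarge
    calc _ ≤ (#S - 1) * (#U - 1).choose (r + 1) + (#U - 1).choose (r + 1) :=
          Nat.add_le_add_left hlow _
      _ = #S * (#U - 1).choose (r + 1) := by rw [← Nat.succ_mul, Nat.succ_eq_add_one,
            Nat.sub_add_cancel (by omega)]

end CrossIntersecting

section Links

variable [DecidableEq α] {r : ℕ} {S U V : Finset α} {F : Finset (Finset α)}

theorem card_memberSubfamily_eq_vertexDegree (F : Finset (Finset α)) (v : α) :
    #(F.memberSubfamily v) = vertexDegree F v :=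
  card_image_of_injOn ((erase_injOn' v).mono fun _ hA => (mem_filter.1 hA).2)

theorem isCrossIntersecting_memberSubfamily (hF : F ⊆ powersetCard (r + 1) V)
    (hcover : ∀ v ∈ S, ∃ A ∈ F, v ∈ A)
    (hS : ∀ M, IsMatching F M → #M ≤ 2 → #(S ∩ M.biUnion id) ≤ 1) :
    IsCrossIntersecting r (V \ S) S fun v => F.memberSubfamily v := by
  have hedge : ∀ A ∈ F, ∀ v ∈ S, v ∈ A → ∀ w ∈ S, w ∈ A → v = w := fun A hA v hv hvA w hw hwA => by
    have hA1 := hS {A} ⟨by simpa using hA, by simp⟩ (by simp)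
    exact card_le_one.1 hA1 v (by simp [hv, hvA]) w (by simp [hw, hwA])
  refine ⟨fun v hv B hB => ?_, fun v hv => ?_, fun v hv w hw hvw A hA B hB hAB => hvw ?_⟩
  · obtain ⟨hvB, hv'⟩ := mem_memberSubfamily.1 hB
    obtain ⟨hBV, hBcard⟩ := mem_powersetCard.1 (hF hvB)
    refine mem_powersetCard.2 ⟨subset_sdiff.2 ⟨(subset_insert v B).trans hBV, ?_⟩, ?_⟩
    · refine disjoint_left.2 fun x hxB hxS => hv' ?_
      rwa [hedge _ hvB v hv (mem_insert_self v B) x hxS (mem_insert_of_mem hxB)]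
    · rwa [card_insert_of_notMem hv', Nat.add_right_cancel_iff] at hBcard
  · obtain ⟨A, hA, hvA⟩ := hcover v hv
    exact ⟨A.erase v, by simp [mem_memberSubfamily, insert_erase hvA, hA]⟩
  · obtain ⟨hvA, -⟩ := mem_memberSubfamily.1 hA
    obtain ⟨hwB, -⟩ := mem_memberSubfamily.1 hB
    have hdisj : Disjoint (insert v A) (insert w B) := by
      refine disjoint_insert_left.2 ⟨fun hv' => ?_, disjoint_insert_right.2 ⟨fun hw' => ?_, hAB⟩⟩
      · exact hvw (hedge _ hwB v hv hv' w hw (mem_insert_self w B))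
      · exact hvw (hedge _ hvA v hv (mem_insert_self v A) w hw (mem_insert_of_mem hw'))
    have hpair : IsMatching F {insert v A, insert w B} :=
      ⟨insert_subset hvA (singleton_subset_iff.2 hwB), by
        rw [coe_pair, Set.PairwiseDisjoint, Set.pairwise_pair_of_symm]
        exact fun _ => hdisj⟩
    exact card_le_one.1 (hS _ hpair card_le_two) v (by simp [hv]) w (by simp [hw])

theorem choose_add_sum_card_le_of_insert_mem {𝒜 : α → Finset (Finset α)} (hSU : Disjoint S U)
    (hclique : powersetCard (r + 1) U ⊆ F) (h𝒜 : ∀ v ∈ S, ∀ A ∈ 𝒜 v, A ⊆ U ∧ insert v A ∈ F) :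
    (#U).choose (r + 1) + ∑ v ∈ S, #(𝒜 v) ≤ #F := by
  have hnotMem : ∀ v ∈ S, ∀ w ∈ S, ∀ A ∈ 𝒜 w, v ∉ A := fun v hv w hw A hA hvA =>
    disjoint_left.1 hSU hv ((h𝒜 w hw A hA).1 hvA)
  have hcard : #(S.biUnion fun v => (𝒜 v).image (insert v)) = ∑ v ∈ S, #(𝒜 v) := by
    rw [card_biUnion]
    · refine sum_congr rfl fun v hv => card_image_of_injOn fun A hA B hB hAB => ?_
      rw [← erase_insert (hnotMem v hv v hv A hA), ← erase_insert (hnotMem v hv v hv B hB)]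
      exact congrArg (erase · v) hAB
    · refine fun v hv w hw hvw => disjoint_left.2 fun vA hvA hwB => ?_
      obtain ⟨A, -, rfl⟩ := mem_image.1 hvA
      obtain ⟨B, hB, hBA⟩ := mem_image.1 hwB
      have hvB : v ∈ insert w B := hBA ▸ mem_insert_self v A
      exact (mem_insert.1 hvB).elim hvw (hnotMem v hv w hw B hB)
  rw [← card_powersetCard, ← hcard, ← card_union_of_disjoint]
  · refine card_le_card (union_subset hclique (biUnion_subset.2 fun v hv => ?_))
    exact image_subset_iff.2 fun A hA => (h𝒜 v hv A hA).2
  · simp only [disjoint_left, mem_biUnion, mem_image]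
    rintro _ hvA ⟨v, hv, A, -, rfl⟩
    exact disjoint_left.1 hSU hv ((mem_powersetCard.1 hvA).1 (mem_insert_self v A))

end Links

theorem eventually_card_le_choose_add_max (α : Type*) (r l : ℕ) :
    ∀ᶠ s : ℕ in atTop, ∀ (m : ℕ) (V : Finset α) (F : Finset (Finset α)),
      (r + 3) * (s + 1) = m + 2 → #V = m + (l + 2) → F ⊆ powersetCard (r + 3) V →
      (∀ v ∈ V, ∃ A ∈ F, v ∈ A) → (∀ M, IsMatching F M → #M ≤ s) →
      #F ≤ m.choose (r + 3) +
        max (oneLargeTotal m (r + 2) (l + 2)) (starsTotal m (r + 2) (l + 2)) := by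
  classical
  obtain ⟨m₀, hm₀⟩ := eventually_atTop.1 <| eventually_mul_choose_lt_choose_succ
    ((l + 2 + 2) * ((r + 2) * (r + 2)) + (l + 2)) 0 r
  filter_upwards [eventually_exists_card_inter_biUnion_isMatching_le_one α (r + 1) l one_le_two,
    eventually_ge_atTop (m₀ + 2)] with s hs hsm m V F hm hV hF hcover hν
  rcases lt_or_ge #F (m.choose (r + 3)) with hsmall | hlarge
  · omega
  obtain ⟨S, hSV, hScard, hS⟩ := hs m V F hm hV hF hcover hν hlarge
  have hcross := isCrossIntersecting_memberSubfamily hF (fun v hv => hcover v (hSV hv)) hS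
  have hcomp : #(V \ S) = m := by rw [card_sdiff_of_subset hSV]; omega
  have hm₀m : m₀ ≤ m - 2 := by nlinarith [Nat.sub_add_cancel (show 2 ≤ m by nlinarith)]
  have hsum := hcross.sum_card_le_max (by omega) (by
    rw [hcomp, hScard]
    exact (hm₀ (m - 2) hm₀m).le.trans (Nat.choose_le_choose _ (by omega)))
  simp only [card_memberSubfamily_eq_vertexDegree, hcomp, hScard] at hsum
  refine (card_le_choose_add_sum_vertexDegree hF hSV).trans ?_
  rw [hV, hScard, Nat.add_sub_cancel]
  exact Nat.add_le_add_left hsum _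

section Extremal

variable {m n r s t : ℕ}

theorem IsMatching.card_le_matchingNumber {F M : Finset (Finset ℕ)} (hM : IsMatching F M) :
    #M ≤ matchingNumber F := by
  refine le_csSup ⟨#F, ?_⟩ ⟨M, hM.subset, rfl, hM.pairwiseDisjoint⟩
  rintro _ ⟨N, hN, rfl, -⟩
  exact card_le_card hN

theorem insert_mem_powersetCard_Icc {A : Finset ℕ} {v : ℕ} (hA : A ∈ powersetCard r (Icc 1 m))
    (hv : v ∈ Icc (m + 1) n) :
    insert v A ∈ powersetCard (r + 1) (Icc 1 n) ∧ insert v A \ Icc 1 m = {v} := by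
  obtain ⟨hAm, hAr⟩ := mem_powersetCard.1 hA
  obtain ⟨hmv, hvn⟩ := mem_Icc.1 hv
  have hvm : v ∉ Icc 1 m := by rw [mem_Icc]; omega
  refine ⟨mem_powersetCard.2 ⟨insert_subset (mem_Icc.2 ⟨by omega, hvn⟩) ?_, ?_⟩, ?_⟩
  · exact hAm.trans (Icc_subset_Icc_right (by omega))
  · rw [card_insert_of_notMem fun hvA => hvm (hAm hvA), hAr]
  · rw [insert_sdiff_of_notMem _ hvm, sdiff_eq_empty_iff_subset.2 hAm, insert_empty]

theorem disjoint_Icc_add_one_Icc (l m n : ℕ) : Disjoint (Icc (m + 1) n) (Icc l m) :=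
  disjoint_left.2 fun v hv hv' => by
    rw [mem_Icc] at hv hv'
    omega

theorem insert_mem_E0_of_not_disjoint {A : Finset ℕ} (hm : (r + 1) * (s + 1) = m + 2)
    (hmn : m + 1 ≤ n) (hA : A ∈ powersetCard r (Icc 1 m)) (hAr : ¬Disjoint A (Icc 1 r)) :
    insert (m + 1) A ∈ E0 n (r + 1) s := by
  have hE0 : (r + 1) * s + (r + 1) = m + 2 := hm
  obtain ⟨hcard, hsdiff⟩ := insert_mem_powersetCard_Icc hA (left_mem_Icc.2 hmn)
  rw [E0, hE0]
  refine mem_union_left _ (mem_union_right _ (mem_filter.2 ⟨hcard, hsdiff, ?_⟩))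
  exact (not_disjoint_iff_nonempty_inter.1 hAr).mono (inter_subset_inter_right (subset_insert _ _))

theorem choose_add_oneLargeTotal_le_card_E0 (hm : (r + 1) * (s + 1) = m + 2) (hr : r ≤ m)
    (ht : 1 ≤ t) : m.choose (r + 1) + oneLargeTotal m r t ≤ #(E0 (m + t) (r + 1) s) := by
  have hE0 : (r + 1) * s + (r + 1) = m + 2 := hm
  let 𝒜 : ℕ → Finset (Finset ℕ) := fun v =>
    if v = m + 1 then {A ∈ powersetCard r (Icc 1 m) | ¬Disjoint A (Icc 1 r)} else {Icc 1 r}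
  have hcore : Icc 1 r ⊆ Icc 1 m := Icc_subset_Icc_right hr
  have hsum : ∑ v ∈ Icc (m + 1) (m + t), #(𝒜 v) = oneLargeTotal m r t := by
    rw [← insert_Icc_add_one_left_eq_Icc (by omega), sum_insert (by simp),
      sum_congr rfl fun v hv => congrArg card (if_neg (by rw [mem_Icc] at hv; omega))]
    simp only [𝒜, if_true, card_filter_not_disjoint_powersetCard hcore, Nat.card_Icc,
      card_singleton, sum_const, smul_eq_mul, oneLargeTotal, Nat.add_sub_cancel]
    omega
  have hclique : powersetCard (r + 1) (Icc 1 m) ⊆ E0 (m + t) (r + 1) s := by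
    rw [E0, hE0]
    exact subset_union_left.trans subset_union_left
  rw [← hsum]
  convert choose_add_sum_card_le_of_insert_mem (disjoint_Icc_add_one_Icc 1 m (m + t)) hclique
    fun v hv A hA => ?_
  · simp
  by_cases hvm : v = m + 1
  · obtain ⟨hA, hAr⟩ := mem_filter.1 (by simpa only [𝒜, if_pos hvm] using hA)
    exact ⟨(mem_powersetCard.1 hA).1, hvm ▸ insert_mem_E0_of_not_disjoint hm (by omega) hA hAr⟩
  · obtain rfl : A = Icc 1 r := by simpa only [𝒜, if_neg hvm, mem_singleton] using hA
    refine ⟨hcore, mem_union_right _ (mem_image.2 ⟨v, ?_, rfl⟩)⟩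
    simp only [mem_Icc] at hv ⊢
    omega

theorem choose_add_starsTotal_le_card_E1 (hm : (r + 1) * (s + 1) = m + 2) (hr : 1 ≤ r)
    (hm_pos : 1 ≤ m) : m.choose (r + 1) + starsTotal m r t ≤ #(E1 (m + t) (r + 1) s) := by
  have hE1 : (r + 1) * s + (r + 1) = m + 2 := hm
  let star : Finset (Finset ℕ) := {A ∈ powersetCard r (Icc 1 m) | 1 ∈ A}
  have hstar : #star = (m - 1).choose (r - 1) := by
    simpa only [singleton_subset_iff, Nat.card_Icc, card_singleton, Nat.add_sub_cancel] using
      card_filter_powersetCard_subset {1} (Icc 1 m) r (by simpa using hm_pos) (by simpa using hr)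
  have hsum : ∑ _v ∈ Icc (m + 1) (m + t), #star = starsTotal m r t := by
    simp [hstar, starsTotal]
  have hclique : powersetCard (r + 1) (Icc 1 m) ⊆ E1 (m + t) (r + 1) s := by
    rw [E1, hE1]
    exact subset_union_left
  rw [← hsum]
  convert choose_add_sum_card_le_of_insert_mem (disjoint_Icc_add_one_Icc 1 m (m + t)) hclique
    fun v hv A hA => ?_
  · simp
  obtain ⟨hA, h1A⟩ := mem_filter.1 hA
  obtain ⟨hcard, hsdiff⟩ := insert_mem_powersetCard_Icc hA hv
  refine ⟨(mem_powersetCard.1 hA).1, ?_⟩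
  simp only [E1, hE1, mem_union, mem_filter]
  exact .inr ⟨hcard, mem_insert_of_mem h1A, v, hv, hsdiff⟩

end Extremal

theorem stmt1_general (k l : ℕ) (hk : 3 ≤ k) :
    ∃ s₀ : ℕ, 0 < s₀ ∧
      ∀ (n s : ℕ), s₀ < s → n = k * (s + 1) + l →
        ∀ F ⊆ Finset.powersetCard k (Finset.Icc 1 n),
          NonTrivial n F → matchingNumber F ≤ s →
            (l + 3 < k → F.card ≤ (E0 n k s).card) ∧
            (k ≤ l + 3 → F.card ≤ (E1 n k s).card) := by
  obtain ⟨r, rfl⟩ := Nat.exists_eq_add_of_le' hk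
  obtain ⟨m₀, hm₀⟩ := eventually_atTop.1 <|
    eventually_mul_choose_lt_choose_succ ((r + 2) * (r + 1)) 0 r
  obtain ⟨s₀, hs₀⟩ := eventually_atTop.1 (eventually_card_le_choose_add_max ℕ r l)
  refine ⟨s₀ + m₀ + r + 2, by omega, ?_⟩
  rintro _ s hs rfl F hF hcover hν
  obtain ⟨m, hm⟩ : ∃ m, (r + 3) * (s + 1) = m + 2 :=
    ⟨_, (Nat.sub_add_cancel (by nlinarith)).symm⟩
  have hms : s ≤ m := by nlinarith
  have hn : (r + 3) * (s + 1) + l = m + (l + 2) := by omega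
  rw [hn] at hF hcover ⊢
  have hupper := hs₀ s (by omega) m _ F hm (by simp) hF hcover
    fun M hM => hM.card_le_matchingNumber.trans hν
  refine ⟨fun hlk => ?_, fun hkl => ?_⟩
  · have hlarge : (r + 2) * (r + 1) * (m - 2).choose r ≤ (m - 1).choose (r + 1) :=
      (hm₀ (m - 2) (by omega)).le.trans (Nat.choose_le_choose _ (by omega))
    rw [max_eq_left (starsTotal_le_oneLargeTotal (by omega) (by omega) hlarge)] at hupper
    exact hupper.trans (choose_add_oneLargeTotal_le_card_E0 hm (by omega) (by omega))
  · rw [max_eq_right (oneLargeTotal_le_starsTotal (by omega) (by omega))] at hupper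
    exact hupper.trans (choose_add_starsTotal_le_card_E1 hm (by omega) (by omega))

/-- the corollary confirming Frankl's conjecture for large `s`. -/
theorem stmt1 (k l : ℕ) (hk : 3 ≤ k) (hl : 1 ≤ l) :
    ∃ s₀ : ℕ, 0 < s₀ ∧
      ∀ (n s : ℕ), s₀ < s → n = k * (s + 1) + l →
        ∀ F ⊆ Finset.powersetCard k (Finset.Icc 1 n),
          NonTrivial n F → matchingNumber F ≤ s →
            (l + 3 < k → F.card ≤ (E0 n k s).card) ∧
            (k ≤ l + 3 → F.card ≤ (E1 n k s).card) :=
  stmt1_general k l hk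
end
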